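/- Cauchy's estimates: assume m > 4. Let α, β ∈ ℕ^m be multi-indices. There exists a constant c_{α,β,m,k} > 0, depending only on α, β, m, k, with the following property: for every open set Ω ⊆ ℝ^m and every f ∈ C²(Ω×𝔹^m, ℋ_k) with 𝒟_k f = 0 in Ω × 𝔹^m, the function f is infinitely differentiable in (x,ν) on Ω × 𝔹^m, and for every a ∈ Ω, ν₀ ∈ 𝔹^m, and r₁, r₂ > 0 with the closed ball B̄(a,r₁) contained in Ω and the closed ball B̄(ν₀,r₂) contained in 𝔹^m, one has |D_ν^β D_x^α f(a,ν₀)| ≤ c_{α,β,m,k} · sup_{B(a,r₁)×B(ν₀,r₂)} |f| / (r₁^{|α|} r₂^{|β|}). -/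

import Mathlib

noncomputable section

open MeasureTheory Metric Filter Topology
open scoped RealInnerProductSpace

/-- `ℝ^m` as a Euclidean space. -/
abbrev Evec (m : ℕ) : Type := EuclideanSpace ℝ (Fin m)

/-- Partial derivative in the `i`-th coordinate direction. -/
def pdv {m : ℕ} (i : Fin m) (f : Evec m → ℝ) (x : Evec m) : ℝ :=
  fderiv ℝ f x (EuclideanSpace.single i 1)

/-- Euclidean Laplacian on `ℝ^m`. -/
def lapl {m : ℕ} (f : Evec m → ℝ) (x : Evec m) : ℝ :=
  ∑ i : Fin m, pdv i (pdv i f) x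

/-- `p` is a real-valued polynomial function on `ℝ^m`, homogeneous of degree `k` and
harmonic; i.e. `p ∈ ℋ_k`. -/
def IsHk (m k : ℕ) (p : Evec m → ℝ) : Prop :=
  (∃ P : MvPolynomial (Fin m) ℝ, ∀ x : Evec m, p x = MvPolynomial.eval (fun i => x i) P) ∧
  (∀ (c : ℝ) (x : Evec m), p (c • x) = c ^ k * p x) ∧
  (∀ x : Evec m, lapl p x = 0)

/-- The surface measure `dS` on the unit sphere `𝕊^{m-1}`, as a measure on `ℝ^m`. -/
def sphereM (m : ℕ) : Measure (Evec m) :=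
  Measure.map Subtype.val ((volume : Measure (Evec m)).toSphere)

/-- `ω_m`, the surface area of the unit sphere `𝕊^{m-1}`. -/
def omegaS (m : ℕ) : ℝ := (sphereM m Set.univ).toReal

/-- The constant `c_{m,k} = 2(m+2k-2)/((m-2)ω_m)`. -/
def cmk (m k : ℕ) : ℝ := 2 * ((m : ℝ) + 2 * k - 2) / (((m : ℝ) - 2) * omegaS m)

/-- The reflection `R_a(u) = u - 2⟨a,u⟩a/|a|²` (in Clifford notation `a u a/|a|²`). -/
def reflv {m : ℕ} (a u : Evec m) : Evec m :=
  u - (2 * ⟪a, u⟫ / ‖a‖ ^ 2) • a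

/-- `dim ℋ_k`. -/
def hdim (m k : ℕ) : ℕ :=
  Nat.choose (m + k - 1) (m - 1) - Nat.choose (m + k - 3) (m - 1)

/-- `Z` is the reproducing kernel `Z_k` of `ℋ_k` on the unit sphere: a symmetric,
rotation invariant kernel, bounded by `dim ℋ_k` on the unit ball, belonging to `ℋ_k`
in the first variable and reproducing elements of `ℋ_k` from their spherical values. -/
def IsZk (m k : ℕ) (Z : Evec m → Evec m → ℝ) : Prop :=
  (∀ v : Evec m, IsHk m k (fun u => Z u v)) ∧
  (∀ p : Evec m → ℝ, IsHk m k p → ∀ v : Evec m, (∫ u, Z u v * p u ∂(sphereM m)) = p v) ∧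
  (∀ u v : Evec m, Z u v = Z v u) ∧
  (∀ u v : Evec m, ‖u‖ ≤ 1 → ‖v‖ ≤ 1 → |Z u v| ≤ (hdim m k : ℝ)) ∧
  (∀ (A : Evec m ≃ₗᵢ[ℝ] Evec m) (u v : Evec m), Z (A u) (A v) = Z u v)

/-- The point `(x', y) ∈ ℝ^{d+1}` with first `d` coordinates `x'` and last coordinate `y`. -/
def upP (d : ℕ) (x' : Evec d) (y : ℝ) : Evec (d + 1) :=
  (EuclideanSpace.equiv (Fin (d + 1)) ℝ).symm
    (Fin.snoc (⇑(EuclideanSpace.equiv (Fin d) ℝ) x') y)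

/-- The first `d` coordinates of a point of `ℝ^{d+1}`. -/
def downP (d : ℕ) (x : Evec (d + 1)) : Evec d :=
  (EuclideanSpace.equiv (Fin d) ℝ).symm (fun i => x (Fin.castSucc i))

/-- The last coordinate of a point of `ℝ^{d+1}`. -/
def lastP (d : ℕ) (x : Evec (d + 1)) : ℝ := x (Fin.last d)

/-- The Poisson kernel `P_H` for bosonic Laplacians in the upper half-space `ℝ^{d+1}_+`,
`P_H(x,t,u,v) = c_{m,k} (y/|x-t|^m) Z_k(R_{x-t}(u), v)` with `m = d+1`, `x = (x',y)`,
`t = (t',0)`. -/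
def PH (d k : ℕ) (Z : Evec (d + 1) → Evec (d + 1) → ℝ) (x' : Evec d) (y : ℝ)
    (t' : Evec d) (u v : Evec (d + 1)) : ℝ :=
  cmk (d + 1) k * (y / ‖upP d x' y - upP d t' 0‖ ^ (d + 1)) *
    Z (reflv (upP d x' y - upP d t' 0) u) v

/-- The Poisson integral `P_H[f]` in the upper half-space. -/
def PHint (d k : ℕ) (Z : Evec (d + 1) → Evec (d + 1) → ℝ)
    (f : Evec d → Evec (d + 1) → ℝ) (x' : Evec d) (y : ℝ) (v : Evec (d + 1)) : ℝ :=
  ∫ t' : Evec d, (∫ u, PH d k Z x' y t' u v * f t' u ∂(sphereM (d + 1)))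

/-- The Poisson kernel `P_B` for bosonic Laplacians in the unit ball. -/
def PB (m k : ℕ) (Z : Evec m → Evec m → ℝ) (x ζ ω ν : Evec m) : ℝ :=
  (cmk m k / 2) * ((1 - ‖x‖ ^ 2) / ‖x - ζ‖ ^ m) * Z (reflv (x - ζ) ω) ν

/-- The Poisson integral `P_B[h]` in the unit ball. -/
def PBint (m k : ℕ) (Z : Evec m → Evec m → ℝ) (h : Evec m → Evec m → ℝ)
    (x ν : Evec m) : ℝ :=
  ∫ ζ, (∫ ω, PB m k Z x ζ ω ν * h ζ ω ∂(sphereM m)) ∂(sphereM m)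

/-- Partial derivative in the first (`x`) variable. -/
def pd1 {m : ℕ} (i : Fin m) (f : Evec m → Evec m → ℝ) : Evec m → Evec m → ℝ :=
  fun x u => fderiv ℝ (fun x₁ => f x₁ u) x (EuclideanSpace.single i 1)

/-- Partial derivative in the second (`u`) variable. -/
def pd2 {m : ℕ} (i : Fin m) (f : Evec m → Evec m → ℝ) : Evec m → Evec m → ℝ :=
  fun x u => fderiv ℝ (fun u₁ => f x u₁) u (EuclideanSpace.single i 1)

/-- The bosonic Laplacian `𝒟_k`. -/
def Dk (m k : ℕ) (f : Evec m → Evec m → ℝ) : Evec m → Evec m → ℝ := fun x u =>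
  (∑ i : Fin m, pd1 i (pd1 i f) x u)
    - (4 / ((m : ℝ) + 2 * k - 2)) *
        ∑ i : Fin m, ∑ j : Fin m, u i * pd1 i (pd2 j (pd1 j f)) x u
    + (4 * ‖u‖ ^ 2 / (((m : ℝ) + 2 * k - 2) * ((m : ℝ) + 2 * k - 4))) *
        ∑ i : Fin m, ∑ j : Fin m, pd2 i (pd1 i (pd2 j (pd1 j f))) x u

/-- `f ∈ C²(Ω×𝔹^m, ℋ_k)`: twice continuously differentiable on `Ω × 𝔹^m` and, for each
fixed `x ∈ Ω`, coinciding in the second variable with an element of `ℋ_k`. -/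
def C2Hk (m k : ℕ) (Ω : Set (Evec m)) (f : Evec m → Evec m → ℝ) : Prop :=
  ContDiffOn ℝ 2 (fun q : Evec m × Evec m => f q.1 q.2) (Ω ×ˢ ball (0 : Evec m) 1) ∧
  ∀ x ∈ Ω, ∃ q, IsHk m k q ∧ ∀ u ∈ closedBall (0 : Evec m) 1, f x u = q u

/-- The `L^p` norm `(∫_{ℝ^{m-1}} ∫_{𝕊^{m-1}} |f(x',u)|^p dS(u) dx')^{1/p}` (`m = d+1`),
valued in `ℝ≥0∞`. -/
def lpH (d : ℕ) (p : ℝ) (f : Evec d → Evec (d + 1) → ℝ) : ENNReal :=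
  (∫⁻ x' : Evec d, ∫⁻ u, ENNReal.ofReal (|f x' u| ^ p) ∂(sphereM (d + 1))) ^ (1 / p)

/-- `f ∈ L^p(ℝ^{m-1}×𝔹^m, ℋ_k)` (`m = d+1`). -/
def MemLpH (d k : ℕ) (p : ℝ) (f : Evec d → Evec (d + 1) → ℝ) : Prop :=
  Measurable (fun q : Evec d × Evec (d + 1) => f q.1 q.2) ∧
  (∀ x' : Evec d, ∃ q, IsHk (d + 1) k q ∧
    ∀ u ∈ closedBall (0 : Evec (d + 1)) 1, f x' u = q u) ∧
  lpH d p f < ⊤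

/-- The `L^p` norm `(∫_{𝕊^{m-1}} ∫_{𝕊^{m-1}} |h(ζ,ω)|^p dS(ω) dS(ζ))^{1/p}`,
valued in `ℝ≥0∞`. -/
def lpS (m : ℕ) (p : ℝ) (h : Evec m → Evec m → ℝ) : ENNReal :=
  (∫⁻ ζ, ∫⁻ ω, ENNReal.ofReal (|h ζ ω| ^ p) ∂(sphereM m) ∂(sphereM m)) ^ (1 / p)

/-- `h ∈ L^p(𝕊^{m-1}×𝔹^m, ℋ_k)`. -/
def MemLpS (m k : ℕ) (p : ℝ) (h : Evec m → Evec m → ℝ) : Prop :=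
  Measurable (fun q : Evec m × Evec m => h q.1 q.2) ∧
  (∀ ζ : Evec m, ‖ζ‖ = 1 → ∃ q, IsHk m k q ∧
    ∀ ω ∈ closedBall (0 : Evec m) 1, h ζ ω = q ω) ∧
  lpS m p h < ⊤

/-- Iterated partial derivative `D_x^α` in the first variable, for a multi-index `α ∈ ℕ^m`. -/
def Dx {m : ℕ} (α : Fin m → ℕ) (f : Evec m → Evec m → ℝ) : Evec m → Evec m → ℝ :=
  (List.finRange m).foldr (fun i g => (pd1 i)^[α i] g) f

/-- Iterated partial derivative `D_ν^β` in the second variable, for a multi-index `β ∈ ℕ^m`. -/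
def Dv {m : ℕ} (β : Fin m → ℕ) (f : Evec m → Evec m → ℝ) : Evec m → Evec m → ℝ :=
  (List.finRange m).foldr (fun i g => (pd2 i)^[β i] g) f

open scoped ContDiff
open scoped Convolution

/-- Directional derivative. -/
def dirD {F : Type*} [NormedAddCommGroup F] [NormedSpace ℝ F] (v : F) (g : F → ℝ) : F → ℝ :=
  fun x => fderiv ℝ g x v

section
variable {F : Type*} [NormedAddCommGroup F] [NormedSpace ℝ F]

theorem ContDiff.dirD {g : F → ℝ} (hg : ContDiff ℝ ∞ g) (v : F) : ContDiff ℝ ∞ (dirD v g) :=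
  (hg.fderiv_right (m := ∞) (by simp)).clm_apply contDiff_const

end

theorem contDiff_lapl {m : ℕ} {g : Evec m → ℝ} (hg : ContDiff ℝ ∞ g) : ContDiff ℝ ∞ (lapl g) :=
  ContDiff.sum fun i _ => ContDiff.dirD (ContDiff.dirD hg (EuclideanSpace.single i 1))
    (EuclideanSpace.single i 1)

/-- A compactly supported smooth function of the squared norm, averaged against dilations. -/
theorem hasDerivAt_dilation_integral {m : ℕ} {g φ : Evec m → ℝ} (hg : ContDiff ℝ ∞ g)
    (hφ : Continuous φ) (hφs : HasCompactSupport φ) (a : Evec m) (t : ℝ) :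
    HasDerivAt (fun t : ℝ => ∫ y, g (a + t • y) * φ y)
      (∫ y, fderiv ℝ g (a + t • y) y * φ y) t := by
  have hgc : Continuous (fderiv ℝ g) := hg.continuous_fderiv (by simp)
  have hc : Continuous fun p : ℝ × Evec m => fderiv ℝ g (a + p.1 • p.2) p.2 * φ p.2 := by
    fun_prop
  obtain ⟨C, hC⟩ := ((isCompact_closedBall t 1).prod hφs).exists_bound_of_continuousOn
    hc.continuousOn
  have hint : ∀ s : ℝ, Integrable fun y => g (a + s • y) * φ y := fun s =>
    (Continuous.integrable_of_hasCompactSupport (by fun_prop) hφs.mul_left)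
  refine (hasDerivAt_integral_of_dominated_loc_of_deriv_le
    (F := fun (t : ℝ) y => g (a + t • y) * φ y)
    (F' := fun (t : ℝ) y => fderiv ℝ g (a + t • y) y * φ y)
    (bound := (tsupport φ).indicator fun _ => C) (ball_mem_nhds t one_pos)
    (Eventually.of_forall fun s => (hint s).aestronglyMeasurable) (hint t) ?_ ?_ ?_ ?_).2
  · exact Continuous.aestronglyMeasurable (by fun_prop)
  · refine Eventually.of_forall fun y s hs => ?_
    by_cases hy : y ∈ tsupport φ
    · rw [Set.indicator_of_mem hy]
      exact hC (s, y) ⟨ball_subset_closedBall hs, hy⟩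
    · rw [Set.indicator_of_notMem hy, image_eq_zero_of_notMem_tsupport hy]
      simp
  · exact (integrable_indicator_iff hφs.isCompact.measurableSet).2
      (integrableOn_const hφs.isCompact.measure_lt_top.ne)
  · refine Eventually.of_forall fun y s _ => ?_
    have h1 : HasFDerivAt g (fderiv ℝ g (a + s • y)) (a + s • y) :=
      (hg.differentiable (by simp) _).hasFDerivAt
    have h2 : HasDerivAt (fun s : ℝ => a + s • y) y s := by
      simpa using ((hasDerivAt_id s).smul_const y).const_add a
    exact (h1.comp_hasDerivAt s h2).mul_const _

/-- If `∇φ₁ = -y φ` with `φ₁` compactly supported, then `d/dt ∫ g(a + ty) φ(y) dy` is an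
average of the Laplacian of `g`. -/
theorem integral_radial_deriv {m : ℕ} {g φ φ₁ : Evec m → ℝ} (hg : ContDiff ℝ ∞ g)
    (hφ₁ : ContDiff ℝ ∞ φ₁)
    (hφ₁s : HasCompactSupport φ₁)
    (hrel : ∀ (y : Evec m) (i : Fin m), pdv i φ₁ y = -(y i * φ y)) (a : Evec m) (t : ℝ) :
    ∫ y, fderiv ℝ g (a + t • y) y * φ y = t * ∫ y, lapl g (a + t • y) * φ₁ y := by
  have hexp : ∀ (L : Evec m →L[ℝ] ℝ) (y : Evec m),
      L y = ∑ i, y i * L (EuclideanSpace.single i 1) := by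
    intro L y
    conv_lhs => rw [← (EuclideanSpace.basisFun (Fin m) ℝ).sum_repr y]
    simp
  have hd : ∀ i, ContDiff ℝ ∞ (pdv i g) := fun i => ContDiff.dirD hg _
  have hdd : ∀ i, ContDiff ℝ ∞ (pdv i (pdv i g)) := fun i => ContDiff.dirD (hd i) _
  have hφd : ∀ i, ContDiff ℝ ∞ (pdv i φ₁) := fun i => ContDiff.dirD hφ₁ _
  have hφds : ∀ i, HasCompactSupport (pdv i φ₁) := fun i => hφ₁s.fderiv_apply ℝ _
  have e1 : ∀ y, fderiv ℝ g (a + t • y) y * φ y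
      = ∑ i, -(pdv i g (a + t • y) * pdv i φ₁ y) := by
    intro y
    rw [hexp, Finset.sum_mul]
    refine Finset.sum_congr rfl fun i _ => ?_
    rw [hrel]; simp only [pdv]; ring
  have hda : ∀ i y, fderiv ℝ (fun y => pdv i g (a + t • y)) y (EuclideanSpace.single i 1)
      = t * pdv i (pdv i g) (a + t • y) := by
    intro i y
    have := fderiv_comp_smul (𝕜 := ℝ) (f := fun z => pdv i g (a + z)) (x := y) t
    rw [this, fderiv_comp_add_left]
    simp [pdv]
  have hca : ∀ i, Continuous fun y => pdv i g (a + t • y) := fun i =>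
    (hd i).continuous.comp (by fun_prop)
  have hcda : ∀ i, Continuous fun y => pdv i (pdv i g) (a + t • y) := fun i =>
    (hdd i).continuous.comp (by fun_prop)
  have hsm : ∀ i, ContDiff ℝ ∞ fun y => pdv i g (a + t • y) := fun i =>
    (hd i).comp (by fun_prop)
  have hi1 : ∀ i, Integrable fun y => pdv i g (a + t • y) * pdv i φ₁ y := fun i =>
    ((hca i).mul (hφd i).continuous).integrable_of_hasCompactSupport (hφds i).mul_left
  have hi2 : ∀ i, Integrable fun y => pdv i (pdv i g) (a + t • y) * φ₁ y := fun i =>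
    ((hcda i).mul hφ₁.continuous).integrable_of_hasCompactSupport hφ₁s.mul_left
  have hi3 : ∀ i, Integrable fun y => pdv i g (a + t • y) * φ₁ y := fun i =>
    ((hca i).mul hφ₁.continuous).integrable_of_hasCompactSupport hφ₁s.mul_left
  have e2 : ∀ i, ∫ y, pdv i g (a + t • y) * pdv i φ₁ y
      = -(t * ∫ y, pdv i (pdv i g) (a + t • y) * φ₁ y) := by
    intro i
    have := integral_mul_fderiv_eq_neg_fderiv_mul_of_integrable (μ := volume)
      (f := fun y => pdv i g (a + t • y)) (g := φ₁) (v := EuclideanSpace.single i 1)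
      (by simp only [hda, mul_assoc]; exact (hi2 i).const_mul t) (hi1 i) (hi3 i)
      (fun x _ => (hsm i).differentiable (by simp) x)
      (fun x _ => hφ₁.differentiable (by simp) x)
    simp only [hda, mul_assoc] at this
    rw [integral_const_mul] at this
    exact this
  simp only [e1]
  rw [integral_finsetSum _ fun i _ => by simpa using (hi1 i).neg]
  simp only [integral_neg, e2, neg_neg, ← Finset.mul_sum]
  congr 1
  rw [← integral_finsetSum _ fun i _ => hi2 i]
  simp only [lapl, Finset.sum_mul]

/-- For `Φ` smooth on the line vanishing beyond `1`, an antiderivative-type companion. -/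
theorem exists_radial_primitive (Φ : ℝ → ℝ) (hΦ : ContDiff ℝ ∞ Φ) (h0 : ∀ s, 1 ≤ s → Φ s = 0) :
    ∃ Ψ : ℝ → ℝ, ContDiff ℝ ∞ Ψ ∧ (∀ s, 1 ≤ s → Ψ s = 0) ∧
      ∀ s, HasDerivAt Ψ (-(1 / 2) * Φ s) s := by
  have hd : ∀ s, HasDerivAt (fun s => -(1 / 2) * ∫ x in (1 : ℝ)..s, Φ x) (-(1 / 2) * Φ s) s :=
    fun s => (intervalIntegral.integral_hasDerivAt_right (hΦ.continuous.intervalIntegrable _ _)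
      (hΦ.continuous.stronglyMeasurableAtFilter _ _) hΦ.continuous.continuousAt).const_mul _
  refine ⟨_, ?_, ?_, hd⟩
  · rw [contDiff_infty_iff_deriv]
    refine ⟨fun s => (hd s).differentiableAt, ?_⟩
    rw [funext fun s => (hd s).deriv]
    exact contDiff_const.mul hΦ
  · intro s hs
    rw [intervalIntegral.integral_congr (g := fun _ => 0)]
    · simp
    · intro x hx
      rw [Set.uIcc_of_le hs] at hx
      exact h0 x hx.1

theorem hasCompactSupport_radial {m : ℕ} {Φ : ℝ → ℝ} (h0 : ∀ s, 1 ≤ s → Φ s = 0) :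
    HasCompactSupport fun y : Evec m => Φ (‖y‖ ^ 2) := by
  refine HasCompactSupport.intro (isCompact_closedBall (0 : Evec m) 1) fun y hy => h0 _ ?_
  rw [mem_closedBall_zero_iff, not_le] at hy
  nlinarith

theorem exists_polynomial_primitive {N : ℕ} (q : Polynomial ℝ) (hq : q.degree < N) :
    ∃ P : Polynomial ℝ, P.degree < (N + 1 : ℕ) ∧ P.derivative = q := by
  rcases eq_or_ne q 0 with rfl | hq0
  · exact ⟨0, by simp, by simp⟩
  refine ⟨∑ n ∈ Finset.range N, Polynomial.monomial (n + 1) (q.coeff n / (n + 1)), ?_, ?_⟩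
  · refine (Polynomial.degree_sum_le _ _).trans_lt ?_
    rw [Finset.sup_lt_iff (WithBot.bot_lt_coe _)]
    intro n hn
    refine (Polynomial.degree_monomial_le _ _).trans_lt ?_
    exact_mod_cast Nat.succ_lt_succ (Finset.mem_range.1 hn)
  · conv_rhs => rw [q.as_sum_range' N ((Polynomial.natDegree_lt_iff_degree_lt hq0).2 hq)]
    rw [Polynomial.derivative_sum]
    refine Finset.sum_congr rfl fun n _ => ?_
    rw [Polynomial.derivative_monomial]
    congr 1
    push_cast
    field_simp

/-- Radial averages of a polyharmonic function are even polynomials in the radius. -/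
theorem radial_average_eq_polynomial {m : ℕ} (N : ℕ) : ∀ (g : Evec m → ℝ) (Φ : ℝ → ℝ)
    (a : Evec m) (r : ℝ), ContDiff ℝ ∞ g → ContDiff ℝ ∞ Φ → (∀ s, 1 ≤ s → Φ s = 0) → 0 < r →
    (∀ x ∈ ball a r, lapl^[N] g x = 0) →
    ∃ p : Polynomial ℝ, p.degree < N ∧
      ∀ t ∈ Set.Icc 0 r, ∫ y, g (a + t • y) * Φ (‖y‖ ^ 2) = p.eval (t ^ 2) := by
  induction N with
  | zero =>
    intro g Φ a r hg hΦ h0 hr hN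
    refine ⟨0, by simp, fun t ht => ?_⟩
    rw [integral_eq_zero_of_ae]
    · simp
    · refine Eventually.of_forall fun y => ?_
      by_cases hy : 1 ≤ ‖y‖ ^ 2
      · simp [h0 _ hy]
      · have hy' : ‖y‖ < 1 := by nlinarith [norm_nonneg y]
        have : g (a + t • y) = 0 := by
          refine hN _ ?_
          rw [mem_ball_iff_norm, add_sub_cancel_left, norm_smul, Real.norm_of_nonneg ht.1]
          nlinarith [ht.1, ht.2, norm_nonneg y]
        simp [this]
  | succ N ih =>
    intro g Φ a r hg hΦ h0 hr hN
    obtain ⟨Ψ, hΨ, hΨ0, hΨd⟩ := exists_radial_primitive Φ hΦ h0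
    obtain ⟨q, hq, hqe⟩ := ih (lapl g) Ψ a r (contDiff_lapl hg) hΨ hΨ0 hr
      (fun x hx => by simpa [Function.iterate_succ_apply] using hN x hx)
    have hns : ContDiff ℝ ∞ fun y : Evec m => ‖y‖ ^ 2 := contDiff_norm_sq ℝ
    have hrel : ∀ (y : Evec m) (i : Fin m),
        pdv i (fun y => Ψ (‖y‖ ^ 2)) y = -(y i * Φ (‖y‖ ^ 2)) := by
      intro y i
      have h1 : HasFDerivAt (fun y : Evec m => ‖y‖ ^ 2) (2 • (innerSL ℝ y)) y :=
        (hasStrictFDerivAt_norm_sq y).hasFDerivAt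
      have := (hΨd (‖y‖ ^ 2)).comp_hasFDerivAt y h1
      unfold pdv
      erw [this.fderiv]
      simp [EuclideanSpace.inner_single_right]
      ring
    have hder : ∀ t ∈ Set.Icc 0 r, HasDerivAt (fun t : ℝ => ∫ y, g (a + t • y) * Φ (‖y‖ ^ 2))
        (t * q.eval (t ^ 2)) t := by
      intro t ht
      have h := hasDerivAt_dilation_integral hg (φ := fun y => Φ (‖y‖ ^ 2))
        (hΦ.continuous.comp hns.continuous) (hasCompactSupport_radial h0) a t
      have e := integral_radial_deriv hg (φ := fun y => Φ (‖y‖ ^ 2))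
        (hΨ.comp hns) (hasCompactSupport_radial hΨ0) hrel a t
      simp only [Function.comp_def, hqe t ht] at e
      rwa [e] at h
    obtain ⟨P, hP, hPd⟩ := exists_polynomial_primitive q hq
    set H : ℝ → ℝ := fun t => ∫ y, g (a + t • y) * Φ (‖y‖ ^ 2) with hH
    have hPder : ∀ t : ℝ, HasDerivAt (fun t : ℝ => (1 / 2) * P.eval (t ^ 2))
        (t * q.eval (t ^ 2)) t := by
      intro t
      have h1 := (P.hasDerivAt (t ^ 2)).comp t (hasDerivAt_pow 2 t)
      have h2 := h1.const_mul (1 / 2 : ℝ)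
      rw [hPd] at h2
      refine h2.congr_deriv ?_
      push_cast
      ring
    have hconst := constant_of_has_deriv_right_zero
      (f := fun t => H t - (1 / 2) * P.eval (t ^ 2)) (a := 0) (b := r)
      (fun t ht => ((hder t ht).sub (hPder t)).continuousAt.continuousWithinAt)
      (fun t ht => by
        have := ((hder t ⟨ht.1, ht.2.le⟩).sub (hPder t)).hasDerivWithinAt (s := Set.Ici t)
        rwa [sub_self] at this)
    refine ⟨Polynomial.C (1 / 2) * P + Polynomial.C (H 0 - (1 / 2) * P.eval (0 ^ 2)), ?_,
      fun t ht => ?_⟩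
    · refine (Polynomial.degree_add_le _ _).trans_lt (max_lt ?_ ?_)
      · exact (by simpa using hP)
      · exact Polynomial.degree_C_le.trans_lt (by exact_mod_cast Nat.succ_pos N)
    · have := hconst t ht
      simp only [Polynomial.eval_add, Polynomial.eval_mul, Polynomial.eval_C]
      linarith

/-- A smooth kernel reproducing all polyharmonic functions of order `N`. -/
theorem exists_polyharmonic_kernel (m N : ℕ) : ∃ ψ : Evec m → ℝ, ContDiff ℝ ∞ ψ ∧
    HasCompactSupport ψ ∧ (∀ y, 1 ≤ ‖y‖ → ψ y = 0) ∧
    ∀ (g : Evec m → ℝ) (a : Evec m) (r : ℝ), ContDiff ℝ ∞ g → 0 < r →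
      (∀ x ∈ ball a r, lapl^[N] g x = 0) → g a = ∫ y, g (a + r • y) * ψ y := by
  have hns : ContDiff ℝ ∞ fun y : Evec m => ‖y‖ ^ 2 := contDiff_norm_sq ℝ
  let b : ContDiffBump (0 : ℝ) := ⟨1 / 2, 1, by norm_num, by norm_num⟩
  have hb0 : ∀ s : ℝ, 1 ≤ s → b s = 0 := fun s hs => b.zero_of_le_dist (by
    simpa [b] using hs.trans (le_abs_self s))
  have hbs : ContDiff ℝ ∞ (b : ℝ → ℝ) := b.contDiff
  set I : ℝ := ∫ y : Evec m, b (‖y‖ ^ 2) with hI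
  have hIpos : 0 < I := by
    have hc : Continuous fun y : Evec m => b (‖y‖ ^ 2) := hbs.continuous.comp hns.continuous
    refine hc.integral_pos_of_hasCompactSupport_nonneg_nonzero (hasCompactSupport_radial hb0)
      (fun y => b.nonneg) (x := 0) ?_
    simp [b.one_of_mem_closedBall (show (0 : ℝ) ∈ closedBall 0 b.rIn by simp [b.rIn_pos.le])]
  let τ : ℕ → ℝ := fun j => 1 / ((j : ℝ) + 1)
  have hτ : ∀ j, 0 < τ j := fun j => by positivity
  have hτ1 : ∀ j, τ j ≤ 1 := fun j => by
    rw [div_le_one (by positivity)]; linarith [Nat.cast_nonneg (α := ℝ) j]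
  have hinj : Set.InjOn (fun j => (τ j) ^ 2) (Finset.range N) := by
    intro i _ j _ h
    have h1 : τ i = τ j := (pow_left_inj₀ (hτ i).le (hτ j).le two_ne_zero).1 h
    have h2 : (i : ℝ) + 1 = j + 1 := by
      have := congrArg (fun z => 1 / z) h1
      simpa [τ] using this
    exact_mod_cast add_right_cancel h2
  let w : ℕ → ℝ := fun j => (Lagrange.basis (Finset.range N) (fun j => (τ j) ^ 2) j).eval 0
  have hw : ∀ p : Polynomial ℝ, p.degree < N →
      p.eval 0 = ∑ j ∈ Finset.range N, w j * p.eval ((τ j) ^ 2) := by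
    intro p hp
    conv_lhs => rw [Lagrange.eq_interpolate (f := p) (s := Finset.range N) hinj (by simpa using hp)]
    rw [Lagrange.interpolate_apply, Polynomial.eval_finsetSum]
    refine Finset.sum_congr rfl fun j _ => ?_
    rw [Polynomial.eval_mul, Polynomial.eval_C, mul_comm]
  have hterm0 : ∀ j, ∀ y : Evec m, 1 ≤ ‖y‖ → b (‖(τ j)⁻¹ • y‖ ^ 2) = 0 := by
    intro j y hy
    refine hb0 _ ?_
    rw [norm_smul, norm_inv, Real.norm_of_nonneg (hτ j).le]
    have : 1 ≤ (τ j)⁻¹ := (one_le_inv₀ (hτ j)).2 (hτ1 j)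
    nlinarith [one_le_mul_of_one_le_of_one_le this hy]
  have hsupp : ∀ y : Evec m, 1 ≤ ‖y‖ →
      ∑ j ∈ Finset.range N, w j * I⁻¹ * ((τ j)⁻¹ ^ m * b (‖(τ j)⁻¹ • y‖ ^ 2)) = 0 :=
    fun y hy => Finset.sum_eq_zero fun j _ => by rw [hterm0 j y hy]; simp
  have hsm : ∀ j, ContDiff ℝ ∞ fun y : Evec m => b (‖(τ j)⁻¹ • y‖ ^ 2) := fun j =>
    hbs.comp (hns.comp (contDiff_const_smul _))
  refine ⟨fun y => ∑ j ∈ Finset.range N, w j * I⁻¹ * ((τ j)⁻¹ ^ m * b (‖(τ j)⁻¹ • y‖ ^ 2)),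
    ?_, ?_, hsupp, ?_⟩
  · exact ContDiff.sum fun j _ => contDiff_const.mul (contDiff_const.mul (hsm j))
  · refine HasCompactSupport.intro (isCompact_closedBall (0 : Evec m) 1) fun y hy => hsupp y ?_
    rw [mem_closedBall_zero_iff, not_le] at hy
    exact hy.le
  · intro g a r hg hr hN
    obtain ⟨p, hp, hpe⟩ := radial_average_eq_polynomial N g b a r hg hbs hb0 hr hN
    have h0 : g a * I = p.eval 0 := by
      have := hpe 0 ⟨le_rfl, hr.le⟩
      simpa [integral_const_mul] using this
    have hp' : (p.comp (Polynomial.C (r ^ 2) * Polynomial.X)).degree < N := by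
      rw [Polynomial.degree_lt_iff_coeff_zero] at hp ⊢
      intro n hn
      rw [Polynomial.comp_C_mul_X_coeff, hp n hn, zero_mul]
    have h1 := hw _ hp'
    simp only [Polynomial.eval_comp, Polynomial.eval_mul, Polynomial.eval_C, Polynomial.eval_X,
      mul_zero] at h1
    have h2 : ∀ j, ∫ y, g (a + r • y) * ((τ j)⁻¹ ^ m * b (‖(τ j)⁻¹ • y‖ ^ 2))
        = p.eval (r ^ 2 * (τ j) ^ 2) := by
      intro j
      have hmem : r * τ j ∈ Set.Icc 0 r :=
        ⟨(mul_pos hr (hτ j)).le, mul_le_of_le_one_right hr.le (hτ1 j)⟩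
      have h3 := Measure.integral_comp_inv_smul (volume : Measure (Evec m))
        (fun z => g (a + (r * τ j) • z) * b (‖z‖ ^ 2)) (τ j)
      rw [hpe _ hmem, mul_pow] at h3
      simp only [smul_smul, mul_assoc, mul_inv_cancel₀ (hτ j).ne', mul_one, finrank_euclideanSpace,
        Fintype.card_fin, smul_eq_mul, abs_of_pos (pow_pos (hτ j) m)] at h3
      have h4 : ∀ y, g (a + r • y) * ((τ j)⁻¹ ^ m * b (‖(τ j)⁻¹ • y‖ ^ 2))
          = (τ j)⁻¹ ^ m * (g (a + r • y) * b (‖(τ j)⁻¹ • y‖ ^ 2)) := fun y => by ring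
      simp only [h4]
      rw [integral_const_mul, h3, inv_pow, inv_mul_cancel_left₀ (pow_pos (hτ j) m).ne']
    have hi : ∀ j, Integrable fun y =>
        g (a + r • y) * (w j * I⁻¹ * ((τ j)⁻¹ ^ m * b (‖(τ j)⁻¹ • y‖ ^ 2))) := by
      intro j
      refine Continuous.integrable_of_hasCompactSupport ?_ ?_
      · exact (hg.continuous.comp (by fun_prop)).mul
          (continuous_const.mul (continuous_const.mul (hsm j).continuous))
      · refine HasCompactSupport.intro (isCompact_closedBall (0 : Evec m) 1) fun y hy => ?_
        rw [mem_closedBall_zero_iff, not_le] at hy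
        rw [hterm0 j y hy.le]
        simp
    have h5 : ∀ j y, g (a + r • y) * (w j * I⁻¹ * ((τ j)⁻¹ ^ m * b (‖(τ j)⁻¹ • y‖ ^ 2)))
        = w j * I⁻¹ * (g (a + r • y) * ((τ j)⁻¹ ^ m * b (‖(τ j)⁻¹ • y‖ ^ 2))) :=
      fun j y => by ring
    simp only [Finset.mul_sum]
    rw [integral_finsetSum _ fun j _ => hi j]
    simp only [h5, integral_const_mul, h2]
    calc g a = I⁻¹ * (g a * I) := by field_simp
      _ = _ := by
        rw [h0, h1, Finset.mul_sum]
        exact Finset.sum_congr rfl fun j _ => by ring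

section
variable {F : Type*} [NormedAddCommGroup F] [NormedSpace ℝ F]

/-- Iterated directional derivative along a list of directions. -/
def iterD (l : List F) (g : F → ℝ) : F → ℝ := l.foldr dirD g

theorem ContDiff.iterD {g : F → ℝ} (hg : ContDiff ℝ ∞ g) (l : List F) :
    ContDiff ℝ ∞ (iterD l g) := by
  induction l with
  | nil => exact hg
  | cons v l ih => exact ContDiff.dirD ih v

theorem HasCompactSupport.iterD {g : F → ℝ} (hg : HasCompactSupport g) (l : List F) :
    HasCompactSupport (iterD l g) := by
  induction l with
  | nil => exact hg
  | cons v l ih => exact ih.fderiv_apply ℝ v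

theorem Filter.EventuallyEq.iterD {g h : F → ℝ} {x : F} (e : g =ᶠ[𝓝 x] h) (l : List F) :
    iterD l g =ᶠ[𝓝 x] iterD l h := by
  induction l with
  | nil => exact e
  | cons v l ih =>
    filter_upwards [ih.fderiv (𝕜 := ℝ)] with y hy
    exact congrArg (fun L => L v) hy

theorem iterD_comp_affine (g : F → ℝ) (a : F) (s : ℝ) (l : List F) (y : F) :
    iterD l (fun y => g (a + s • y)) y = s ^ l.length * iterD l g (a + s • y) := by
  induction l generalizing y with
  | nil => simp [iterD]
  | cons v l ih =>
    change fderiv ℝ (iterD l fun y => g (a + s • y)) y v = _ * fderiv ℝ (iterD l g) (a + s • y) v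
    rw [funext ih]
    have h1 := fderiv_const_smul_field (𝕜 := ℝ) (s ^ l.length)
      (f := fun y => iterD l g (a + s • y))
    have h2 := fderiv_comp_smul (𝕜 := ℝ) (f := fun z => iterD l g (a + z)) (x := y) s
    rw [fderiv_comp_add_left] at h2
    have h3 := congrArg (fun L => L y v) h1
    simp only [Pi.smul_def, smul_eq_mul, smul_apply, h2] at h3
    rw [h3, List.length_cons, pow_succ, mul_assoc]

theorem iterD_sum_mul {ι : Type*} (s : Finset ι) {O : Set F} (hO : IsOpen O) {c : ι → F → ℝ}
    (hc : ∀ i ∈ s, ContDiffOn ℝ ∞ (c i) O) (w : ι → ℝ) (l : List F) :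
    (∀ i ∈ s, ContDiffOn ℝ ∞ (iterD l (c i)) O) ∧
    ∀ x ∈ O, iterD l (fun x => ∑ i ∈ s, c i x * w i) x = ∑ i ∈ s, iterD l (c i) x * w i := by
  induction l with
  | nil => exact ⟨hc, fun x _ => rfl⟩
  | cons v l ih =>
    obtain ⟨h1, h2⟩ := ih
    refine ⟨fun i hi => ?_, fun x hx => ?_⟩
    · exact ((h1 i hi).fderiv_of_isOpen hO (m := ∞) (by simp)).clm_apply contDiffOn_const
    · have he : iterD l (fun x => ∑ i ∈ s, c i x * w i) =ᶠ[𝓝 x]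
          fun x => ∑ i ∈ s, iterD l (c i) x * w i :=
        eventually_of_mem (hO.mem_nhds hx) h2
      have hd : ∀ i ∈ s, DifferentiableAt ℝ (iterD l (c i)) x := fun i hi =>
        ((h1 i hi).contDiffAt (hO.mem_nhds hx)).differentiableAt (by simp)
      change fderiv ℝ (iterD l fun x => ∑ i ∈ s, c i x * w i) x v
        = ∑ i ∈ s, fderiv ℝ (iterD l (c i)) x v * w i
      rw [he.fderiv_eq, fderiv_fun_sum fun i hi => (hd i hi).mul_const (w i)]
      rw [sum_apply]
      refine Finset.sum_congr rfl fun i hi => ?_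
      rw [fderiv_mul_const (hd i hi)]
      simp [mul_comm]

end

theorem iterD_convolution {m : ℕ} {h K : Evec m → ℝ} (hh : LocallyIntegrable h)
    (hK : ContDiff ℝ ∞ K) (hKs : HasCompactSupport K) (l : List (Evec m)) :
    iterD l (h ⋆[ContinuousLinearMap.mul ℝ ℝ] K)
      = h ⋆[ContinuousLinearMap.mul ℝ ℝ] (iterD l K) := by
  induction l with
  | nil => rfl
  | cons v l ih =>
    change dirD v (iterD l (h ⋆[ContinuousLinearMap.mul ℝ ℝ] K)) = _
    rw [ih]
    funext x
    have hd := (HasCompactSupport.iterD hKs l).hasFDerivAt_convolution_right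
      (ContinuousLinearMap.mul ℝ ℝ) (μ := volume) hh ((ContDiff.iterD hK l).of_le (by simp)) x
    unfold dirD
    rw [hd.fderiv]
    exact convolution_precompR_apply _ hh ((HasCompactSupport.iterD hKs l).fderiv ℝ)
      ((ContDiff.iterD hK l).continuous_fderiv (by simp)) x v

/-- Interior derivative estimates for a function reproduced by a smooth kernel. -/
theorem cauchy_estimate_of_reproducing {m : ℕ} {ψ : Evec m → ℝ} (hψ : ContDiff ℝ ∞ ψ)
    (hψs : HasCompactSupport ψ) (hψ0 : ∀ y, 1 ≤ ‖y‖ → ψ y = 0) (l : List (Evec m)) :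
    ∃ C : ℝ, 0 ≤ C ∧ ∀ (g : Evec m → ℝ) (a : Evec m) (r M : ℝ), 0 < r →
      ContinuousOn g (ball a r) → (∀ x ∈ ball a r, |g x| ≤ M) →
      (∀ x ∈ ball a (r / 2), g x = ∫ y, g (x + (r / 2) • y) * ψ y) →
      ContDiffAt ℝ ∞ g a ∧ |iterD l g a| ≤ C * M / r ^ l.length := by
  let K : Evec m → ℝ := fun w => ψ (-w)
  have hK : ContDiff ℝ ∞ K := hψ.comp contDiff_neg
  have hKs : HasCompactSupport K := hψs.comp_homeomorph (Homeomorph.neg _)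
  refine ⟨2 ^ l.length * ∫ w, |iterD l K w|, by positivity, ?_⟩
  intro g a r M hr hg hM hrep
  have hr2 : 0 < r / 2 := by positivity
  let h : Evec m → ℝ := (ball (0 : Evec m) 2).indicator fun y => g (a + (r / 2) • y)
  have hmem : ∀ y ∈ ball (0 : Evec m) 2, a + (r / 2) • y ∈ ball a r := by
    intro y hy
    rw [mem_ball_zero_iff] at hy
    rw [mem_ball_iff_norm, add_sub_cancel_left, norm_smul, Real.norm_of_nonneg hr2.le]
    nlinarith
  have hM0 : 0 ≤ M := (abs_nonneg _).trans (hM a (mem_ball_self hr))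
  have hhM : ∀ y, |h y| ≤ M := by
    intro y
    by_cases hy : y ∈ ball (0 : Evec m) 2
    · simp only [h, Set.indicator_of_mem hy]
      exact hM _ (hmem y hy)
    · simpa only [h, Set.indicator_of_notMem hy, abs_zero] using hM0
  have hhm : AEStronglyMeasurable h := by
    refine (aestronglyMeasurable_indicator_iff measurableSet_ball).2 ?_
    exact (hg.comp (by fun_prop) hmem).aestronglyMeasurable measurableSet_ball
  have hhi : LocallyIntegrable h := by
    exact fun x => ⟨ball x 1, ball_mem_nhds x one_pos,
      Measure.integrableOn_of_bounded (M := M) measure_ball_lt_top.ne hhm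
        (Eventually.of_forall hhM)⟩
  have hconv : ∀ x ∈ ball (0 : Evec m) 1,
      h x = (h ⋆[ContinuousLinearMap.mul ℝ ℝ] K) x := by
    intro x hx
    rw [mem_ball_zero_iff] at hx
    have hx2 : x ∈ ball (0 : Evec m) 2 := by rw [mem_ball_zero_iff]; linarith
    have h1 : a + (r / 2) • x ∈ ball a (r / 2) := by
      rw [mem_ball_iff_norm, add_sub_cancel_left, norm_smul, Real.norm_of_nonneg hr2.le]
      nlinarith
    rw [convolution_def]
    rw [← integral_add_left_eq_self _ x]
    simp only [h, Set.indicator_of_mem hx2]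
    rw [hrep _ h1]
    refine integral_congr_ae (Eventually.of_forall fun y => ?_)
    simp only [ContinuousLinearMap.mul_apply', K]
    rw [show -(x - (x + y)) = y by abel]
    by_cases hy : 1 ≤ ‖y‖
    · simp [hψ0 y hy]
    · rw [Set.indicator_of_mem, smul_add, add_assoc]
      rw [mem_ball_zero_iff]
      push Not at hy
      linarith [norm_add_le x y]
  have hcs : ContDiff ℝ ∞ (h ⋆[ContinuousLinearMap.mul ℝ ℝ] K) :=
    hKs.contDiff_convolution_right _ hhi hK
  have heq : (fun y => g (a + (r / 2) • y)) =ᶠ[𝓝 0] (h ⋆[ContinuousLinearMap.mul ℝ ℝ] K) := by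
    filter_upwards [ball_mem_nhds (0 : Evec m) one_pos] with y hy
    rw [← hconv y hy]
    have : y ∈ ball (0 : Evec m) 2 := ball_subset_ball (by norm_num) hy
    simp only [h, Set.indicator_of_mem this]
  constructor
  · have h1 : ContDiffAt ℝ ∞ (fun y => g (a + (r / 2) • y)) 0 :=
      hcs.contDiffAt.congr_of_eventuallyEq heq
    have h2 : g = (fun y => g (a + (r / 2) • y)) ∘ fun x => (r / 2)⁻¹ • (x - a) := by
      funext x
      simp only [Function.comp_apply, smul_smul, mul_inv_cancel₀ hr2.ne', one_smul,
        add_sub_cancel]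
    rw [h2]
    refine ContDiffAt.comp a (by simpa using h1) (by fun_prop)
  · have h1 := (Filter.EventuallyEq.iterD heq l).eq_of_nhds
    rw [iterD_comp_affine, iterD_convolution hhi hK hKs, smul_zero, add_zero] at h1
    have h2 : |(h ⋆[ContinuousLinearMap.mul ℝ ℝ] (iterD l K)) 0| ≤ M * ∫ w, |iterD l K w| := by
      rw [convolution_def, ← integral_neg_eq_self, ← integral_const_mul]
      have hKi : Integrable fun w => M * |iterD l K w| :=
        ((ContDiff.iterD hK l).continuous.integrable_of_hasCompactSupport
          (HasCompactSupport.iterD hKs l)).abs.const_mul M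
      rw [← Real.norm_eq_abs]
      refine norm_integral_le_of_norm_le hKi (Eventually.of_forall fun w => ?_)
      simp only [ContinuousLinearMap.mul_apply', Real.norm_eq_abs, abs_mul, zero_sub, neg_neg]
      exact mul_le_mul_of_nonneg_right (hhM _) (abs_nonneg _)
    rw [← h1, abs_mul, abs_of_pos (pow_pos hr2 _), div_pow, div_mul_eq_mul_div,
      div_le_iff₀ (by positivity)] at h2
    rw [le_div_iff₀ (by positivity)]
    linarith

theorem contDiff_mvPolynomial_eval {m : ℕ} (P : MvPolynomial (Fin m) ℝ) :
    ContDiff ℝ ∞ fun x : Evec m => MvPolynomial.eval (fun i => x i) P := by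
  induction P using MvPolynomial.induction_on with
  | C a => simpa using contDiff_const
  | add p q hp hq => simpa using hp.add hq
  | mul_X p i hp =>
    have : ContDiff ℝ ∞ fun x : Evec m => x i :=
      (EuclideanSpace.proj i : Evec m →L[ℝ] ℝ).contDiff
    simpa using hp.mul this

theorem IsHk.contDiff {m k : ℕ} {p : Evec m → ℝ} (hp : IsHk m k p) : ContDiff ℝ ∞ p := by
  obtain ⟨P, hP⟩ := hp.1
  rw [funext hP]
  exact contDiff_mvPolynomial_eval P

section
variable {F : Type*} [NormedAddCommGroup F] [NormedSpace ℝ F]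

theorem dirD_add {f g : F → ℝ} (hf : ContDiff ℝ ∞ f) (hg : ContDiff ℝ ∞ g) (v : F) :
    dirD v (f + g) = dirD v f + dirD v g := by
  funext x
  simp [dirD, fderiv_add (hf.differentiable (by simp) x) (hg.differentiable (by simp) x)]

theorem dirD_smul (c : ℝ) (f : F → ℝ) (v : F) : dirD v (c • f) = c • dirD v f := by
  funext x
  simp [dirD, fderiv_const_smul_field]

end

theorem lapl_add {m : ℕ} {f g : Evec m → ℝ} (hf : ContDiff ℝ ∞ f) (hg : ContDiff ℝ ∞ g) :
    lapl (f + g) = lapl f + lapl g := by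
  funext x
  simp only [lapl, Pi.add_apply, ← Finset.sum_add_distrib]
  refine Finset.sum_congr rfl fun i _ => ?_
  change dirD _ (dirD _ (f + g)) x = dirD _ (dirD _ f) x + dirD _ (dirD _ g) x
  rw [dirD_add hf hg, dirD_add (ContDiff.dirD hf _) (ContDiff.dirD hg _)]
  rfl

theorem lapl_smul {m : ℕ} (c : ℝ) (f : Evec m → ℝ) : lapl (c • f) = c • lapl f := by
  funext x
  simp only [lapl, Pi.smul_apply, Finset.smul_sum]
  refine Finset.sum_congr rfl fun i _ => ?_
  change dirD _ (dirD _ (c • f)) x = c • dirD _ (dirD _ f) x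
  rw [dirD_smul, dirD_smul]
  rfl

/-- `ℋ_k` as a space of functions. -/
def hkSubmodule (m k : ℕ) : Submodule ℝ (Evec m → ℝ) where
  carrier := {p | IsHk m k p}
  zero_mem' := by
    refine ⟨⟨0, by simp⟩, by simp, fun x => ?_⟩
    have := lapl_smul (0 : ℝ) (0 : Evec m → ℝ)
    rw [zero_smul, zero_smul] at this
    simp [this]
  add_mem' := by
    intro p q hp hq
    obtain ⟨P, hP⟩ := hp.1
    obtain ⟨Q, hQ⟩ := hq.1
    refine ⟨⟨P + Q, fun x => by simp [hP, hQ]⟩, fun c x => ?_, fun x => ?_⟩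
    · simp only [Pi.add_apply, hp.2.1, hq.2.1, mul_add]
    · rw [lapl_add hp.contDiff hq.contDiff, Pi.add_apply, hp.2.2, hq.2.2, add_zero]
  smul_mem' := by
    intro a p hp
    obtain ⟨P, hP⟩ := hp.1
    refine ⟨⟨MvPolynomial.C a * P, fun x => by simp [hP]⟩, fun c x => ?_, fun x => ?_⟩
    · simp only [Pi.smul_apply, hp.2.1, smul_eq_mul]; ring
    · rw [lapl_smul, Pi.smul_apply, hp.2.2, smul_zero]

theorem mem_hkSubmodule {m k : ℕ} {p : Evec m → ℝ} : p ∈ hkSubmodule m k ↔ IsHk m k p := Iff.rfl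

/-- Evaluation of polynomials as functions on Euclidean space. -/
def evalFun (m : ℕ) : MvPolynomial (Fin m) ℝ →ₗ[ℝ] (Evec m → ℝ) where
  toFun P := fun x => MvPolynomial.eval (fun i => x i) P
  map_add' P Q := by funext x; simp
  map_smul' c P := by funext x; simp

theorem eval_smul_of_isHomogeneous {m n : ℕ} {Q : MvPolynomial (Fin m) ℝ} (hQ : Q.IsHomogeneous n)
    (c : ℝ) (x : Fin m → ℝ) :
    MvPolynomial.eval (fun i => c * x i) Q = c ^ n * MvPolynomial.eval x Q := by
  rw [MvPolynomial.eval_eq', MvPolynomial.eval_eq', Finset.mul_sum]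
  refine Finset.sum_congr rfl fun d hd => ?_
  have h : ∑ i, d i = n := by
    have := hQ (MvPolynomial.mem_support_iff.1 hd)
    simpa [Finsupp.weight_apply, Finsupp.sum_fintype] using this
  simp only [mul_pow, Finset.prod_mul_distrib, Finset.prod_pow_eq_pow_sum, h]
  ring

theorem hkSubmodule_le_map (m k : ℕ) :
    hkSubmodule m k ≤ (MvPolynomial.homogeneousSubmodule (Fin m) ℝ k).map (evalFun m) := by
  intro p hp
  obtain ⟨P, hP⟩ := hp.1
  refine ⟨MvPolynomial.homogeneousComponent k P,
    MvPolynomial.homogeneousComponent_isHomogeneous k P, ?_⟩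
  funext x
  have hpoly : (∑ n ∈ Finset.range (P.totalDegree + 1), Polynomial.monomial n
      (MvPolynomial.eval (fun i => x i) (MvPolynomial.homogeneousComponent n P)))
      = Polynomial.monomial k (p x) := by
    refine Polynomial.funext fun c => ?_
    rw [Polynomial.eval_finsetSum, Polynomial.eval_monomial, mul_comm, ← hp.2.1, hP]
    conv_rhs => rw [← MvPolynomial.sum_homogeneousComponent P]
    rw [map_sum]
    refine Finset.sum_congr rfl fun n _ => ?_
    rw [Polynomial.eval_monomial, mul_comm]
    exact (eval_smul_of_isHomogeneous
      (MvPolynomial.homogeneousComponent_isHomogeneous n P) c _).symm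
  have h2 := congrArg (fun q => Polynomial.coeff q k) hpoly
  simp only [Polynomial.finsetSum_coeff, Polynomial.coeff_monomial, if_true,
    Finset.sum_ite_eq', Finset.mem_range] at h2
  change MvPolynomial.eval (fun i => x i) (MvPolynomial.homogeneousComponent k P) = p x
  rw [← h2]
  split_ifs with h
  · rfl
  · rw [MvPolynomial.homogeneousComponent_eq_zero _ _ (by omega), map_zero]

instance (m k : ℕ) : FiniteDimensional ℝ (hkSubmodule m k) := by
  have : Module.Finite ℝ
      ((MvPolynomial.homogeneousSubmodule (Fin m) ℝ k).map (evalFun m)) :=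
    Module.Finite.iff_fg.2 ((MvPolynomial.homogeneousSubmodule_fg _ _ k).map _)
  exact Submodule.finiteDimensional_of_le (hkSubmodule_le_map m k)

/-- A basis of `ℋ_k` whose coordinates are combinations of point evaluations in the ball. -/
theorem exists_hk_basis (m k : ℕ) : ∃ (n : ℕ) (b : Fin n → Evec m → ℝ)
    (c : Fin n → (ball (0 : Evec m) 1 →₀ ℝ)), (∀ i, IsHk m k (b i)) ∧
    ∀ q, IsHk m k q → ∀ u, q u = ∑ i, ((c i).sum fun s w => w * q s) * b i u := by
  let W := hkSubmodule m k
  let ev : ball (0 : Evec m) 1 → Module.Dual ℝ W := fun s =>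
    (LinearMap.proj (R := ℝ) (φ := fun _ : Evec m => ℝ) (s : Evec m)) ∘ₗ W.subtype
  have hspan : Submodule.span ℝ (Set.range ev) = ⊤ := by
    refine Submodule.span_eq_top_of_ne_zero fun q hq => ?_
    by_contra! hcon
    refine hq (Subtype.ext (funext fun u => ?_))
    have hpos : 0 < 1 + ‖u‖ := by positivity
    have hmem : (1 + ‖u‖)⁻¹ • u ∈ ball (0 : Evec m) 1 := by
      rw [mem_ball_zero_iff, norm_smul, norm_inv, Real.norm_of_nonneg hpos.le,
        inv_mul_lt_iff₀ hpos]
      linarith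
    have h1 : (q : Evec m → ℝ) ((1 + ‖u‖)⁻¹ • u) = 0 := hcon _ ⟨⟨_, hmem⟩, rfl⟩
    rw [q.2.2.1] at h1
    exact (mul_eq_zero.1 h1).resolve_left (pow_ne_zero _ (inv_ne_zero hpos.ne'))
  let B := Module.finBasis ℝ W
  have hc : ∀ i, ∃ c : ball (0 : Evec m) 1 →₀ ℝ, (c.sum fun s w => w • ev s) = B.coord i := by
    intro i
    rw [← Finsupp.mem_span_range_iff_exists_finsupp, hspan]
    trivial
  choose c hc using hc
  refine ⟨_, fun i => (B i : Evec m → ℝ), c, fun i => (B i).2, fun q hq u => ?_⟩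
  have h1 := congrArg (fun z : W => (z : Evec m → ℝ) u) (B.sum_repr ⟨q, hq⟩)
  simp only at h1
  rw [← h1]
  simp only [Submodule.coe_sum, Finset.sum_apply, Submodule.coe_smul, Pi.smul_apply, smul_eq_mul]
  refine Finset.sum_congr rfl fun i _ => ?_
  congr 1
  have h2 := congrArg (fun L : Module.Dual ℝ W => L ⟨q, hq⟩) (hc i)
  simp only [Module.Basis.coord_apply] at h2
  rw [← h2, Finsupp.sum, Finsupp.sum, LinearMap.sum_apply]
  rfl

/-- Relations satisfied by `A = ⟨u, ∂ₓ⟩`, `B = ⟨∂ᵤ, ∂ₓ⟩`, `T = Δₓ` and `Q = |u|²`. -/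
theorem weyl_relations {R ι : Type*} [Ring R] [Fintype ι] [DecidableEq ι] {X Y U : ι → R}
    (hXX : ∀ i j, Commute (X i) (X j)) (hXY : ∀ i j, Commute (X i) (Y j))
    (hXU : ∀ i j, Commute (X i) (U j))
    (hYU : ∀ i j, Y i * U j = U j * Y i + if i = j then 1 else 0) :
    (∑ i, Y i * X i) * (∑ j, U j * X j)
        = (∑ j, U j * X j) * (∑ i, Y i * X i) + ∑ i, X i * X i ∧
    (∑ i, Y i * X i) * (∑ j, U j * U j)
        = (∑ j, U j * U j) * (∑ i, Y i * X i) + 2 * ∑ i, U i * X i := by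
  constructor
  · have h : ∀ i j, Y i * X i * (U j * X j)
        = U j * X j * (Y i * X i) + if i = j then X i * X j else 0 := by
      intro i j
      calc Y i * X i * (U j * X j) = Y i * (X i * U j) * X j := by noncomm_ring
        _ = Y i * U j * (X i * X j) := by rw [(hXU i j).eq]; noncomm_ring
        _ = U j * (Y i * X j) * X i + if i = j then X i * X j else 0 := by
          rw [hYU, (hXX i j).eq]; split_ifs <;> noncomm_ring
        _ = _ := by rw [(hXY j i).symm.eq]; noncomm_ring
    simp only [Finset.sum_mul_sum, h, Finset.sum_add_distrib]
    congr 1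
    · exact Finset.sum_comm
    · simp
  · have h : ∀ i j, Y i * X i * (U j * U j)
        = U j * U j * (Y i * X i) + if i = j then 2 * (U j * X i) else 0 := by
      intro i j
      have h1 : X i * (U j * U j) = U j * U j * X i := ((hXU i j).mul_right (hXU i j)).eq
      have h2 : Y i * (U j * U j) = U j * U j * Y i + if i = j then 2 * U j else 0 := by
        rw [← mul_assoc, hYU, add_mul, mul_assoc, hYU]
        split_ifs <;> noncomm_ring
      rw [mul_assoc, h1, ← mul_assoc, h2]
      split_ifs <;> noncomm_ring
    simp only [Finset.sum_mul_sum, h, Finset.sum_add_distrib]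
    congr 1
    · exact Finset.sum_comm
    · simp [Finset.mul_sum]

/-- Elimination for the bosonic Laplacian: null solutions of `T - (4/K) A B + 4/(K(K-2)) Q B²`
that are annihilated by `B ^ (k+1)` are annihilated by `T ^ (k+1)`, modulo a stable subspace. -/
theorem elimination {V : Type*} [AddCommGroup V] [Module ℝ V] {A B T Q : Module.End ℝ V}
    (hBA : B * A = A * B + T) (hBQ : B * Q = Q * B + 2 * A) (hTA : Commute T A)
    (hTB : Commute T B) (hTQ : Commute T Q) (I : Submodule ℝ V)
    (hA : ∀ f ∈ I, A f ∈ I) (hB : ∀ f ∈ I, B f ∈ I) (hT : ∀ f ∈ I, T f ∈ I)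
    (hQ : ∀ f ∈ I, Q f ∈ I) {K : ℝ} {k : ℕ} (hK : (2 : ℝ) * k + 2 < K) {f : V}
    (hf : (B ^ (k + 1)) f ∈ I)
    (hD : T f - (4 / K) • A (B f) + (4 / (K * (K - 2))) • Q (B (B f)) ∈ I) :
    (T ^ (k + 1)) f ∈ I := by
  have hk0 : (0 : ℝ) ≤ k := Nat.cast_nonneg k
  have hK0 : K ≠ 0 := by linarith
  have hK2 : K - 2 ≠ 0 := by linarith
  have hBA' : ∀ g, B (A g) = A (B g) + T g := fun g => congrArg (fun L => L g) hBA
  have hBQ' : ∀ g, B (Q g) = Q (B g) + (2 : ℝ) • A g := fun g => by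
    have := congrArg (fun L => L g) hBQ
    simpa [two_smul, two_mul] using this
  have hTB' : ∀ g, T (B g) = B (T g) := fun g => congrArg (fun L => L g) hTB.eq
  have step : ∀ j : ℕ, ((K - 2 * j) * (K - 2 * j - 2) / (K * (K - 2))) • T ((B ^ j) f)
      - (4 / K - 8 * j / (K * (K - 2))) • A (B ((B ^ j) f))
      + (4 / (K * (K - 2))) • Q (B (B ((B ^ j) f))) ∈ I := by
    intro j
    induction j with
    | zero =>
      have : K * (K - 2) / (K * (K - 2)) = 1 := div_self (mul_ne_zero hK0 hK2)
      simpa [this] using hD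
    | succ j ih =>
      have h := hB _ ih
      rw [map_add, map_sub, map_smul, map_smul, map_smul, hBA', hBQ', ← hTB'] at h
      rw [pow_succ', Module.End.mul_apply]
      convert h using 1
      generalize (B ^ j) f = g
      push_cast
      match_scalars <;> field_simp <;> ring
  have main : ∀ n : ℕ, n ≤ k + 1 → (T ^ n) ((B ^ (k + 1 - n)) f) ∈ I := by
    intro n
    induction n with
    | zero => intro _; simpa using hf
    | succ n ih =>
      intro hn
      have ih' := ih (by omega)
      obtain ⟨j, rfl⟩ : ∃ j, k = j + n := ⟨k - n, by omega⟩
      have e1 : j + n + 1 - n = j + 1 := by omega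
      have e2 : j + n + 1 - (n + 1) = j := by omega
      rw [e1, pow_succ', Module.End.mul_apply] at ih'
      rw [e2]
      have hTn : ∀ g ∈ I, (T ^ n) g ∈ I := by
        intro g hg
        clear ih ih' hn e1 e2 hf hK hk0
        induction n with
        | zero => simpa using hg
        | succ n ihn => rw [pow_succ', Module.End.mul_apply]; exact hT _ ihn
      have cA : ∀ g, (T ^ n) (A g) = A ((T ^ n) g) := fun g =>
        congrArg (fun L => L g) (hTA.pow_left n).eq
      have cB : ∀ g, (T ^ n) (B g) = B ((T ^ n) g) := fun g =>
        congrArg (fun L => L g) (hTB.pow_left n).eq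
      have cQ : ∀ g, (T ^ n) (Q g) = Q ((T ^ n) g) := fun g =>
        congrArg (fun L => L g) (hTQ.pow_left n).eq
      have h := hTn _ (step j)
      rw [map_add, map_sub, map_smul, map_smul, map_smul, cA, cQ, cB (B _)] at h
      have h1 : ((K - 2 * j) * (K - 2 * j - 2) / (K * (K - 2))) • (T ^ n) (T ((B ^ j) f)) ∈ I := by
        have h2 := I.add_mem (I.sub_mem h (I.smul_mem (4 / (K * (K - 2))) (hQ _ (hB _ ih'))))
          (I.smul_mem (4 / K - 8 * j / (K * (K - 2))) (hA _ ih'))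
        convert h2 using 1
        abel
      have hne : (K - 2 * j) * (K - 2 * j - 2) / (K * (K - 2)) ≠ 0 := by
        push_cast at hK
        have : (0 : ℝ) ≤ n := Nat.cast_nonneg n
        refine div_ne_zero (mul_ne_zero ?_ ?_) (mul_ne_zero hK0 hK2) <;> linarith
      rw [pow_succ, Module.End.mul_apply]
      exact (I.smul_mem_iff hne).1 h1
  simpa using main (k + 1) le_rfl

section
variable {F : Type*} [NormedAddCommGroup F] [NormedSpace ℝ F]

/-- The space of smooth real-valued functions. -/
def smoothFun (F : Type*) [NormedAddCommGroup F] [NormedSpace ℝ F] : Submodule ℝ (F → ℝ) where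
  carrier := {g | ContDiff ℝ ∞ g}
  add_mem' hf hg := by
    rw [Set.mem_ofPred_eq] at *
    exact hf.add hg
  zero_mem' := by
    rw [Set.mem_ofPred_eq]
    exact contDiff_const
  smul_mem' c _ hg := by
    rw [Set.mem_ofPred_eq] at *
    exact contDiff_const.smul hg

/-- The directional derivative as an operator on smooth functions. -/
def dirDLin (v : F) : Module.End ℝ (smoothFun F) where
  toFun g := ⟨dirD v g.1, ContDiff.dirD g.2 v⟩
  map_add' f g := Subtype.ext (dirD_add f.2 g.2 v)
  map_smul' c f := Subtype.ext (dirD_smul c f.1 v)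

/-- Multiplication by a linear form as an operator on smooth functions. -/
def mulLin (ℓ : F →L[ℝ] ℝ) : Module.End ℝ (smoothFun F) where
  toFun g := ⟨fun x => ℓ x * g.1 x, ContDiff.mul ℓ.contDiff (show ContDiff ℝ ∞ g.1 from g.2)⟩
  map_add' _ _ := Subtype.ext (funext fun _ => mul_add _ _ _)
  map_smul' _ _ := Subtype.ext (funext fun _ => mul_left_comm _ _ _)

theorem dirDLin_commute (v w : F) : Commute (dirDLin v) (dirDLin w) := by
  refine LinearMap.ext fun g => Subtype.ext (funext fun x => ?_)
  have hg : ContDiff ℝ ∞ (g : F → ℝ) := g.2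
  have hd : DifferentiableAt ℝ (fderiv ℝ (g : F → ℝ)) x :=
    (hg.fderiv_right (m := ∞) (by simp)).differentiable (by simp) x
  have key : ∀ v w : F, dirD v (dirD w g) x = fderiv ℝ (fderiv ℝ (g : F → ℝ)) x v w := by
    intro v w
    have := (hd.hasFDerivAt.clm_apply (hasFDerivAt_const w x)).fderiv
    change fderiv ℝ (fun y => fderiv ℝ (g : F → ℝ) y w) x v = _
    rw [this]
    simp
  change dirD v (dirD w g) x = dirD w (dirD v g) x
  rw [key, key]
  exact (hg.contDiffAt.isSymmSndFDerivAt (by simpa using ENat.LEInfty.out)).eq v w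

theorem dirDLin_mul_mulLin (v : F) (ℓ : F →L[ℝ] ℝ) :
    dirDLin v * mulLin ℓ = mulLin ℓ * dirDLin v + ℓ v • 1 := by
  refine LinearMap.ext fun g => Subtype.ext (funext fun x => ?_)
  have hg : ContDiff ℝ ∞ (g : F → ℝ) := g.2
  have := (ℓ.hasFDerivAt.mul (hg.differentiable (by simp) x).hasFDerivAt).fderiv
  change fderiv ℝ (fun y => ℓ y * (g : F → ℝ) y) x v
    = ℓ x * fderiv ℝ (g : F → ℝ) x v + ℓ v * (g : F → ℝ) x
  erw [this]
  simp [mul_comm]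

/-- Smooth functions vanishing on a given set. -/
def vanishingOn (S : Set F) : Submodule ℝ (smoothFun F) where
  carrier := {g | ∀ x ∈ S, g.1 x = 0}
  add_mem' hf hg x hx := by
    change _ + _ = (0 : ℝ)
    rw [hf x hx, hg x hx, add_zero]
  zero_mem' _ _ := rfl
  smul_mem' c g hg x hx := by
    change c * _ = (0 : ℝ)
    rw [hg x hx, mul_zero]

theorem dirDLin_mem_vanishingOn {S : Set F} (hS : IsOpen S) (v : F) {g : smoothFun F}
    (hg : g ∈ vanishingOn S) : dirDLin v g ∈ vanishingOn S := by
  intro x hx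
  have : (g : F → ℝ) =ᶠ[𝓝 x] fun _ => 0 := eventually_of_mem (hS.mem_nhds hx) hg
  change fderiv ℝ (g : F → ℝ) x v = 0
  rw [this.fderiv_eq]
  simp

theorem mulLin_mem_vanishingOn {S : Set F} (ℓ : F →L[ℝ] ℝ) {g : smoothFun F}
    (hg : g ∈ vanishingOn S) : mulLin ℓ g ∈ vanishingOn S := by
  intro x hx
  change ℓ x * g.1 x = 0
  rw [hg x hx, mul_zero]

theorem dirD_comp_eq_of_homogeneous {S : F →L[ℝ] F} {g : F → ℝ} (hg : ContDiff ℝ ∞ g) {a b : ℝ}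
    (h : ∀ q, g (S q) = a * g q) {v : F} (hv : S v = b • v) (q : F) :
    b * dirD v g (S q) = a * dirD v g q := by
  have h1 : HasFDerivAt (fun q => g (S q)) ((fderiv ℝ g (S q)).comp S) q :=
    (hg.differentiable (by simp) (S q)).hasFDerivAt.comp q S.hasFDerivAt
  have h2 : HasFDerivAt (fun q => g (S q)) (a • fderiv ℝ g q) q := by
    rw [funext h]
    exact (hg.differentiable (by simp) q).hasFDerivAt.const_mul a
  have := congrArg (fun L => L v) (h1.unique h2)
  simpa [hv, dirD] using this

end

section
variable {m : ℕ}

/-- The operator `∂_{x_i}`. -/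
def opX (i : Fin m) : Module.End ℝ (smoothFun (Evec m × Evec m)) :=
  dirDLin (EuclideanSpace.single i 1, 0)

/-- The operator `∂_{u_i}`. -/
def opY (i : Fin m) : Module.End ℝ (smoothFun (Evec m × Evec m)) :=
  dirDLin (0, EuclideanSpace.single i 1)

/-- The operator of multiplication by `u_i`. -/
def opU (i : Fin m) : Module.End ℝ (smoothFun (Evec m × Evec m)) :=
  mulLin ((EuclideanSpace.proj i : Evec m →L[ℝ] ℝ).comp (ContinuousLinearMap.snd ℝ _ _))

theorem opX_commute_opU (i j : Fin m) : Commute (opX i) (opU j) := by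
  have := dirDLin_mul_mulLin ((EuclideanSpace.single i 1, 0) : Evec m × Evec m)
    ((EuclideanSpace.proj j : Evec m →L[ℝ] ℝ).comp (ContinuousLinearMap.snd ℝ _ _))
  rw [commute_iff_eq, opX, opU]
  simpa using this

theorem opY_mul_opU (i j : Fin m) : opY i * opU j = opU j * opY i + if i = j then 1 else 0 := by
  have := dirDLin_mul_mulLin ((0, EuclideanSpace.single i 1) : Evec m × Evec m)
    ((EuclideanSpace.proj j : Evec m →L[ℝ] ℝ).comp (ContinuousLinearMap.snd ℝ _ _))
  refine this.trans ?_
  congr 1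
  by_cases h : i = j
  · subst h; simp
  · simp [h]

/-- `B = ⟨∂_u, ∂_x⟩` lowers the degree of homogeneity in `u` by one. -/
theorem opB_homogeneous {j : ℕ} {g : smoothFun (Evec m × Evec m)}
    (hg : ∀ c : ℝ, c ≠ 0 → ∀ q : Evec m × Evec m, g.1 (q.1, c • q.2) = c ^ (j + 1) * g.1 q) :
    ∀ c : ℝ, c ≠ 0 → ∀ q : Evec m × Evec m,
      ((∑ i, opY i * opX i) g).1 (q.1, c • q.2) = c ^ j * ((∑ i, opY i * opX i) g).1 q := by
  intro c hc q
  let S : Evec m × Evec m →L[ℝ] Evec m × Evec m :=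
    (ContinuousLinearMap.fst ℝ _ _).prod (c • ContinuousLinearMap.snd ℝ _ _)
  simp only [LinearMap.sum_apply, Submodule.coe_sum, Finset.sum_apply, Finset.mul_sum]
  refine Finset.sum_congr rfl fun i _ => ?_
  have h1 : ∀ q, (opX i g).1 (S q) = c ^ (j + 1) * (opX i g).1 q := fun q => by
    have := dirD_comp_eq_of_homogeneous (S := S) g.2 (hg c hc) (b := 1)
      (v := (EuclideanSpace.single i 1, 0)) (by simp [S]) q
    rw [one_mul] at this
    exact this
  have h2 := dirD_comp_eq_of_homogeneous (S := S) (opX i g).2 h1 (b := c)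
      (v := (0, EuclideanSpace.single i 1)) (by simp [S]) q
  rw [pow_succ', mul_assoc] at h2
  exact mul_left_cancel₀ hc h2

theorem opB_eq_zero_of_homogeneous {g : smoothFun (Evec m × Evec m)}
    (hg : ∀ c : ℝ, c ≠ 0 → ∀ q : Evec m × Evec m, g.1 (q.1, c • q.2) = c ^ 0 * g.1 q) :
    (∑ i, opY i * opX i) g = 0 := by
  have hc : Continuous g.1 := (show ContDiff ℝ ∞ g.1 from g.2).continuous
  have h0 : ∀ q : Evec m × Evec m, g.1 q = g.1 (q.1, 0) := fun q => by
    have h1 : Tendsto (fun c : ℝ => g.1 (q.1, c • q.2)) (𝓝[≠] 0) (𝓝 (g.1 (q.1, (0 : ℝ) • q.2))) :=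
      (Continuous.tendsto (by fun_prop) 0).mono_left nhdsWithin_le_nhds
    have h2 : Tendsto (fun c : ℝ => g.1 (q.1, c • q.2)) (𝓝[≠] 0) (𝓝 (g.1 q)) :=
      tendsto_const_nhds.congr' (eventually_of_mem self_mem_nhdsWithin fun c hc => by
        simp [hg c hc q])
    simpa using tendsto_nhds_unique h2 h1
  rw [LinearMap.sum_apply]
  refine Finset.sum_eq_zero fun i _ => ?_
  rw [Module.End.mul_apply]
  have : opY i (opX i g) = opX i (opY i g) := congrArg (fun L => L g) (dirDLin_commute _ _).eq
  rw [this]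
  have h3 : opY i g = 0 := by
    refine Subtype.ext (funext fun q => ?_)
    have hd := (show ContDiff ℝ ∞ g.1 from g.2).differentiable (by simp)
    change fderiv ℝ g.1 q (0, EuclideanSpace.single i 1) = 0
    have e1 : HasFDerivAt g.1 ((fderiv ℝ g.1 (q.1, 0)).comp
        ((ContinuousLinearMap.fst ℝ (Evec m) (Evec m)).prod 0)) q := by
      have := (hd (q.1, 0)).hasFDerivAt.comp q
        ((ContinuousLinearMap.fst ℝ (Evec m) (Evec m)).prod
          (0 : Evec m × Evec m →L[ℝ] Evec m)).hasFDerivAt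
      exact this.congr_of_eventuallyEq (Eventually.of_forall h0)
    rw [e1.fderiv]
    exact map_zero (fderiv ℝ g.1 (q.1, 0))
  rw [h3, map_zero]

theorem pd1_eq_opX {f : Evec m → Evec m → ℝ} (g : smoothFun (Evec m × Evec m))
    (h : ∀ x u, f x u = g.1 (x, u)) (i : Fin m) (x u : Evec m) :
    pd1 i f x u = (opX i g).1 (x, u) := by
  have hd := (show ContDiff ℝ ∞ g.1 from g.2).differentiable (by simp) (x, u)
  change fderiv ℝ (fun x₁ => f x₁ u) x _ = fderiv ℝ g.1 (x, u) _
  simp only [h]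
  have := hd.hasFDerivAt.comp x ((hasFDerivAt_id (𝕜 := ℝ) x).prodMk (hasFDerivAt_const u x))
  erw [this.fderiv]
  simp

theorem pd2_eq_opY {f : Evec m → Evec m → ℝ} (g : smoothFun (Evec m × Evec m))
    (h : ∀ x u, f x u = g.1 (x, u)) (i : Fin m) (x u : Evec m) :
    pd2 i f x u = (opY i g).1 (x, u) := by
  have hd := (show ContDiff ℝ ∞ g.1 from g.2).differentiable (by simp) (x, u)
  change fderiv ℝ (fun x₁ => f x x₁) u _ = fderiv ℝ g.1 (x, u) _
  simp only [h]
  have := hd.hasFDerivAt.comp u ((hasFDerivAt_const x u).prodMk (hasFDerivAt_id (𝕜 := ℝ) u))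
  erw [this.fderiv]
  simp

theorem lapl_iterate_eq {f : Evec m → Evec m → ℝ} (g : smoothFun (Evec m × Evec m))
    (h : ∀ x u, f x u = g.1 (x, u)) (n : ℕ) (x u : Evec m) :
    lapl^[n] (fun x => f x u) x = (((∑ i, opX i * opX i) ^ n) g).1 (x, u) := by
  induction n generalizing x with
  | zero => simpa using h x u
  | succ n ih =>
    rw [Function.iterate_succ_apply', pow_succ', Module.End.mul_apply, funext ih,
      LinearMap.sum_apply, Submodule.coe_sum, Finset.sum_apply]
    refine Finset.sum_congr rfl fun i _ => ?_
    generalize ((∑ i, opX i * opX i) ^ n) g = w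
    exact pd1_eq_opX (f := fun x u => (opX i w).1 (x, u)) _ (fun _ _ => rfl) i x u ▸ by
      change fderiv ℝ (fun x₁ => pd1 i (fun x u => w.1 (x, u)) x₁ u) x _ = _
      simp only [pd1_eq_opX (f := fun x u => w.1 (x, u)) w (fun _ _ => rfl)]
      rfl

theorem polyharmonic_of_Dk_eq_zero {k : ℕ} (hm : 4 < m) {f : Evec m → Evec m → ℝ}
    (hf : ContDiff ℝ ∞ fun q : Evec m × Evec m => f q.1 q.2)
    (hh : ∀ (c : ℝ) x u, f x (c • u) = c ^ k * f x u) {O O' : Set (Evec m)} (hO : IsOpen O)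
    (hO' : IsOpen O') (hD : ∀ x ∈ O, ∀ u ∈ O', Dk m k f x u = 0) :
    ∀ x ∈ O, ∀ u ∈ O', lapl^[k + 1] (fun x => f x u) x = 0 := by
  intro x hx u hu
  set g : smoothFun (Evec m × Evec m) := ⟨_, hf⟩ with hg
  have hfg : ∀ x u, f x u = g.1 (x, u) := fun _ _ => rfl
  rw [lapl_iterate_eq g hfg]
  set A := ∑ i : Fin m, opU i * opX i with hA
  set B := ∑ i : Fin m, opY i * opX i with hB
  set T := ∑ i : Fin m, opX i * opX i with hT
  set Q := ∑ i : Fin m, opU i * opU i with hQ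
  have hXX : ∀ i j : Fin m, Commute (opX i) (opX j) := fun i j => dirDLin_commute _ _
  have hXY : ∀ i j : Fin m, Commute (opX i) (opY j) := fun i j => dirDLin_commute _ _
  have hTX : ∀ i, Commute T (opX i) := fun i =>
    Commute.sum_left _ _ _ fun j _ => (hXX j i).mul_left (hXX j i)
  have hTY : ∀ i, Commute T (opY i) := fun i =>
    Commute.sum_left _ _ _ fun j _ => (hXY j i).mul_left (hXY j i)
  have hTU : ∀ i, Commute T (opU i) := fun i =>
    Commute.sum_left _ _ _ fun j _ => (opX_commute_opU j i).mul_left (opX_commute_opU j i)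
  obtain ⟨hBA, hBQ⟩ := weyl_relations (R := Module.End ℝ (smoothFun (Evec m × Evec m)))
    hXX hXY opX_commute_opU opY_mul_opU
  have hS : IsOpen (O ×ˢ O') := hO.prod hO'
  set I := vanishingOn (O ×ˢ O') with hI
  have hXI : ∀ i : Fin m, ∀ w ∈ I, opX i w ∈ I := fun i w hw => dirDLin_mem_vanishingOn hS _ hw
  have hYI : ∀ i : Fin m, ∀ w ∈ I, opY i w ∈ I := fun i w hw => dirDLin_mem_vanishingOn hS _ hw
  have hUI : ∀ i : Fin m, ∀ w ∈ I, opU i w ∈ I := fun i w hw => mulLin_mem_vanishingOn _ hw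
  have hsum : ∀ L M : Fin m → Module.End ℝ (smoothFun (Evec m × Evec m)),
      (∀ i, ∀ w ∈ I, L i w ∈ I) → (∀ i, ∀ w ∈ I, M i w ∈ I) →
      ∀ w ∈ I, (∑ i, L i * M i) w ∈ I := fun L M hL hM w hw => by
    rw [LinearMap.sum_apply]
    exact I.sum_mem fun i _ => hL i _ (hM i w hw)
  have hhom : ∀ n, n ≤ k → ∀ c : ℝ, c ≠ 0 → ∀ q : Evec m × Evec m,
      ((B ^ n) g).1 (q.1, c • q.2) = c ^ (k - n) * ((B ^ n) g).1 q := by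
    intro n
    induction n with
    | zero => exact fun _ c _ q => hh c q.1 q.2
    | succ n ih =>
      intro hn
      rw [pow_succ', Module.End.mul_apply]
      refine opB_homogeneous ?_
      rw [show k - (n + 1) + 1 = k - n by omega]
      exact ih (by omega)
  have hBk : (B ^ (k + 1)) g = 0 := by
    rw [pow_succ', Module.End.mul_apply]
    refine opB_eq_zero_of_homogeneous ?_
    simpa using hhom k le_rfl
  have hK : (2 : ℝ) * k + 2 < m + 2 * k - 2 := by
    have : (4 : ℝ) < m := by exact_mod_cast hm
    linarith
  refine elimination hBA hBQ (.sum_right _ _ _ fun i _ => (hTU i).mul_right (hTX i))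
    (.sum_right _ _ _ fun i _ => (hTY i).mul_right (hTX i))
    (.sum_right _ _ _ fun i _ => (hTU i).mul_right (hTU i)) I (hsum _ _ hUI hXI)
    (hsum _ _ hYI hXI) (hsum _ _ hXI hXI) (hsum _ _ hUI hUI) hK (hBk ▸ I.zero_mem) ?_ (x, u) ⟨hx, hu⟩
  rintro ⟨x, u⟩ ⟨hx, hu⟩
  rw [← hD x hx u hu]
  have p1 := fun i => pd1_eq_opX g hfg i
  have p11 := fun i j => pd1_eq_opX (opX i g) (p1 i) j
  have p21 := fun i j => pd2_eq_opY (opX i g) (p1 i) j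
  have p121 := fun i j l => pd1_eq_opX (opY j (opX i g)) (p21 i j) l
  have p2121 := fun i j l s => pd2_eq_opY (opX l (opY j (opX i g))) (p121 i j l) s
  simp only [Dk, p11, p121, p2121]
  have eT : (T g).1 (x, u) = ∑ i, (opX i (opX i g)).1 (x, u) := by
    simp [hT, LinearMap.sum_apply]
  have eA : (A (B g)).1 (x, u) = ∑ i, ∑ j, u i * (opX i (opY j (opX j g))).1 (x, u) := by
    simp only [hA, hB, LinearMap.sum_apply, map_sum, Submodule.coe_sum, Finset.sum_apply]
    rw [Finset.sum_comm]
    rfl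
  have eQ : (Q (B (B g))).1 (x, u)
      = ‖u‖ ^ 2 * ∑ i, ∑ j, (opY i (opX i (opY j (opX j g)))).1 (x, u) := by
    have : ∀ w : smoothFun (Evec m × Evec m), (Q w).1 (x, u) = ‖u‖ ^ 2 * w.1 (x, u) := fun w => by
      rw [EuclideanSpace.norm_sq_eq, Finset.sum_mul]
      simp only [hQ, LinearMap.sum_apply, Submodule.coe_sum, Finset.sum_apply]
      refine Finset.sum_congr rfl fun i _ => ?_
      change u i * (u i * w.1 (x, u)) = _
      rw [Real.norm_eq_abs, sq_abs]
      ring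
    rw [this]
    simp only [hB, LinearMap.sum_apply, map_sum, Submodule.coe_sum, Finset.sum_apply]
    rw [Finset.sum_comm]
    rfl
  change (T g).1 (x, u) - (4 / _) * (A (B g)).1 (x, u) + (4 / _) * (Q (B (B g))).1 (x, u) = _
  rw [eT, eA, eQ]
  ring

end

section
variable {m : ℕ}

/-- The coefficient with which `∂_p ∂_q c` enters `𝒟_k (c(x) b(u))`. -/
def coefDk (m k : ℕ) (b : Evec m → ℝ) (p q : Fin m) (u : Evec m) : ℝ :=
  (if p = q then b u else 0) - 4 / ((m : ℝ) + 2 * k - 2) * (u p * pdv q b u)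
    + 4 * ‖u‖ ^ 2 / (((m : ℝ) + 2 * k - 2) * ((m : ℝ) + 2 * k - 4)) * pdv p (pdv q b) u

theorem pd1_sum_mul {ι : Type*} [Fintype ι] {O O' : Set (Evec m)} (hO : IsOpen O)
    {c b : ι → Evec m → ℝ} (hc : ∀ i, DifferentiableOn ℝ (c i) O) {f : Evec m → Evec m → ℝ}
    (hf : ∀ x ∈ O, ∀ u ∈ O', f x u = ∑ i, c i x * b i u) (p : Fin m) :
    ∀ x ∈ O, ∀ u ∈ O', pd1 p f x u = ∑ i, pdv p (c i) x * b i u := by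
  intro x hx u hu
  have he : (fun x => f x u) =ᶠ[𝓝 x] fun x => ∑ i, c i x * b i u :=
    eventually_of_mem (hO.mem_nhds hx) fun x hx => hf x hx u hu
  have hd : ∀ i, DifferentiableAt ℝ (c i) x := fun i => (hc i).differentiableAt (hO.mem_nhds hx)
  unfold pd1
  rw [he.fderiv_eq, fderiv_fun_sum fun i _ => (hd i).mul_const _]
  simp only [sum_apply, pdv]
  refine Finset.sum_congr rfl fun i _ => ?_
  rw [fderiv_mul_const (hd i)]
  simp [mul_comm]

theorem pd2_sum_mul {ι : Type*} [Fintype ι] {O O' : Set (Evec m)} (hO' : IsOpen O')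
    {c b : ι → Evec m → ℝ} (hb : ∀ i, DifferentiableOn ℝ (b i) O') {f : Evec m → Evec m → ℝ}
    (hf : ∀ x ∈ O, ∀ u ∈ O', f x u = ∑ i, c i x * b i u) (p : Fin m) :
    ∀ x ∈ O, ∀ u ∈ O', pd2 p f x u = ∑ i, c i x * pdv p (b i) u := by
  intro x hx u hu
  have := pd1_sum_mul (f := fun u x => f x u) (b := c) (O' := O) hO' hb
    (fun u hu x hx => (hf x hx u hu).trans (Finset.sum_congr rfl fun i _ => mul_comm _ _)) p u hu x hx
  exact this.trans (Finset.sum_congr rfl fun i _ => mul_comm _ _)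

theorem Dk_sum_mul {ι : Type*} [Fintype ι] {O O' : Set (Evec m)} (hO : IsOpen O) (hO' : IsOpen O')
    {c b : ι → Evec m → ℝ} (hc : ∀ i, ContDiffOn ℝ 2 (c i) O) (hb : ∀ i, ContDiff ℝ ∞ (b i))
    {f : Evec m → Evec m → ℝ} (hf : ∀ x ∈ O, ∀ u ∈ O', f x u = ∑ i, c i x * b i u) (k : ℕ) :
    ∀ x ∈ O, ∀ u ∈ O',
      Dk m k f x u = ∑ i, ∑ p, ∑ q, pdv p (pdv q (c i)) x * coefDk m k (b i) p q u := by
  intro x hx u hu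
  have hc0 : ∀ i, DifferentiableOn ℝ (c i) O := fun i => (hc i).differentiableOn (by simp)
  have hc1 : ∀ q i, DifferentiableOn ℝ (pdv q (c i)) O := fun q i =>
    (((hc i).fderiv_of_isOpen hO (m := 1) (by norm_num)).clm_apply
      contDiffOn_const).differentiableOn (by simp)
  have hb1 : ∀ q i, ContDiff ℝ ∞ (pdv q (b i)) := fun q i => ContDiff.dirD (hb i) _
  have hb0' : ∀ i, DifferentiableOn ℝ (b i) O' := fun i =>
    ((hb i).differentiable (by simp)).differentiableOn
  have hb1' : ∀ q i, DifferentiableOn ℝ (pdv q (b i)) O' := fun q i =>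
    ((hb1 q i).differentiable (by simp)).differentiableOn
  have p1 := fun q => pd1_sum_mul hO hc0 hf q
  have p11 := fun q => pd1_sum_mul hO (hc1 q) (p1 q) q
  have p21 := fun q => pd2_sum_mul hO' hb0' (p1 q) q
  have p121 := fun p q => pd1_sum_mul hO (hc1 q) (p21 q) p
  have p2121 := fun p q => pd2_sum_mul hO' (hb1' q) (p121 p q) p
  have e1 : ∑ q, pd1 q (pd1 q f) x u
      = ∑ i, ∑ p, ∑ q, pdv p (pdv q (c i)) x * if p = q then b i u else 0 := by
    rw [Finset.sum_congr rfl fun q _ => p11 q x hx u hu, Finset.sum_comm]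
    simp
  have e2 : ∑ p, ∑ q, u p * pd1 p (pd2 q (pd1 q f)) x u
      = ∑ i, ∑ p, ∑ q, pdv p (pdv q (c i)) x * (u p * pdv q (b i) u) := by
    simp only [p121 _ _ x hx u hu, Finset.mul_sum]
    rw [Finset.sum_congr rfl fun p _ => Finset.sum_comm, Finset.sum_comm]
    simp only [mul_left_comm]
  have e3 : ∑ p, ∑ q, pd2 p (pd1 p (pd2 q (pd1 q f))) x u
      = ∑ i, ∑ p, ∑ q, pdv p (pdv q (c i)) x * pdv p (pdv q (b i)) u := by
    simp only [p2121 _ _ x hx u hu]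
    rw [Finset.sum_congr rfl fun p _ => Finset.sum_comm, Finset.sum_comm]
  rw [Dk, e1, e2, e3]
  simp only [Finset.mul_sum, ← Finset.sum_sub_distrib, ← Finset.sum_add_distrib]
  refine Finset.sum_congr rfl fun i _ => Finset.sum_congr rfl fun p _ =>
    Finset.sum_congr rfl fun q _ => ?_
  rw [coefDk]
  ring

theorem pdv_convolution {φ d : Evec m → ℝ} (hφ : LocallyIntegrable φ) (hd : ContDiff ℝ 1 d)
    (hds : HasCompactSupport d) (p : Fin m) :
    pdv p (φ ⋆[ContinuousLinearMap.lsmul ℝ ℝ] d) = φ ⋆[ContinuousLinearMap.lsmul ℝ ℝ] pdv p d := by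
  funext x
  have h := hds.hasFDerivAt_convolution_right (ContinuousLinearMap.lsmul ℝ ℝ) (μ := volume) hφ hd x
  unfold pdv
  rw [h.fderiv]
  exact convolution_precompR_apply _ hφ (hds.fderiv ℝ) (hd.continuous_fderiv (by simp)) x _

/-- A function localised by a cut-off: equal to `c` on a smaller ball. -/
theorem exists_contDiff_hasCompactSupport_eqOn {O : Set (Evec m)} (hO : IsOpen O) {a : Evec m}
    {r δ : ℝ} (hr : 0 < r) (hδ : r < δ) (ha : closedBall a δ ⊆ O) {c : Evec m → ℝ}
    (hc : ContDiffOn ℝ 2 c O) :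
    ∃ d : Evec m → ℝ, ContDiff ℝ 2 d ∧ HasCompactSupport d ∧ Set.EqOn d c (closedBall a r) := by
  let χ : ContDiffBump a := ⟨r, δ, hr, hδ⟩
  refine ⟨fun x => χ x * c x, ?_, χ.hasCompactSupport.mul_right, fun x hx => ?_⟩
  · rw [contDiff_iff_contDiffAt]
    intro x
    by_cases hx : x ∈ O
    · exact χ.contDiff.contDiffAt.mul (hc.contDiffAt (hO.mem_nhds hx))
    · have hx' : x ∈ (tsupport χ)ᶜ := fun h => hx (ha (by rwa [χ.tsupport_eq] at h))
      refine (contDiffAt_const (c := (0 : ℝ))).congr_of_eventuallyEq ?_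
      filter_upwards [(isClosed_tsupport χ).isOpen_compl.mem_nhds hx'] with y hy
      rw [image_eq_zero_of_notMem_tsupport hy, zero_mul]
  · change χ x * c x = c x
    rw [χ.one_of_mem_closedBall hx, one_mul]

theorem sum_bump_convolution_mul {ι : Type*} [Fintype ι] (φ : ContDiffBump (0 : Evec m))
    {D : ι → Evec m → ℝ} (hD : ∀ j, Continuous (D j)) (e : ι → ℝ) {x : Evec m}
    (h : ∀ z ∈ ball x φ.rOut, ∑ j, D j z * e j = 0) :
    ∑ j, (φ.normed volume ⋆[ContinuousLinearMap.lsmul ℝ ℝ] D j) x * e j = 0 := by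
  have hi : ∀ j, Integrable fun t => φ.normed volume t * D j (x - t) * e j := fun j =>
    Continuous.integrable_of_hasCompactSupport
      ((φ.continuous_normed.mul ((hD j).comp (by fun_prop))).mul continuous_const)
      (φ.hasCompactSupport_normed.mul_right.mul_right)
  calc _ = ∑ j, ∫ t, φ.normed volume t * D j (x - t) * e j := by
        simp only [integral_mul_const]; rfl
    _ = ∫ t, ∑ j, φ.normed volume t * D j (x - t) * e j :=
        (integral_finsetSum _ fun j _ => hi j).symm
    _ = ∫ t : Evec m, (0 : ℝ) := by
        refine integral_congr_ae (Eventually.of_forall fun t => ?_)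
        change ∑ j, φ.normed volume t * D j (x - t) * e j = 0
        by_cases ht : t ∈ ball (0 : Evec m) φ.rOut
        · have := h (x - t) (by simpa using ht)
          simp only [mul_assoc, ← Finset.mul_sum, this, mul_zero]
        · have : φ.normed volume t = 0 := by
            rw [← φ.support_normed_eq (μ := volume)] at ht
            simpa using ht
          simp [this]
    _ = 0 := integral_zero _ _

theorem reproducing_of_Dk_coeff {k n : ℕ} (hm : 4 < m) {ψ : Evec m → ℝ} (hψ : ContDiff ℝ ∞ ψ)
    (hψs : HasCompactSupport ψ) (hψ0 : ∀ y, 1 ≤ ‖y‖ → ψ y = 0)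
    (hψr : ∀ (g : Evec m → ℝ) (a : Evec m) (r : ℝ), ContDiff ℝ ∞ g → 0 < r →
      (∀ x ∈ ball a r, lapl^[k + 1] g x = 0) → g a = ∫ y, g (a + r • y) * ψ y)
    {b c : Fin n → Evec m → ℝ} (hb : ∀ i, IsHk m k (b i)) {O O' : Set (Evec m)} (hO : IsOpen O)
    (hO' : IsOpen O') (hc : ∀ i, ContDiffOn ℝ 2 (c i) O)
    (hD : ∀ x ∈ O, ∀ u ∈ O', ∑ i, ∑ p, ∑ q, pdv p (pdv q (c i)) x * coefDk m k (b i) p q u = 0)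
    {a : Evec m} {r : ℝ} (hr : 0 < r) (ha : closedBall a r ⊆ O) {u : Evec m} (hu : u ∈ O') :
    ∑ i, c i a * b i u = ∫ y, (∑ i, c i (a + r • y) * b i u) * ψ y := by
  obtain ⟨δ, hδ, hδO⟩ := (isCompact_closedBall a r).exists_cthickening_subset_open hO ha
  rw [cthickening_closedBall hδ.le hr.le] at hδO
  choose d hd2 hds hdc using fun i => exists_contDiff_hasCompactSupport_eqOn hO (a := a)
    (r := δ / 2 + r) (δ := δ + r) (by linarith) (by linarith) hδO (hc i)
  let φ : ℕ → ContDiffBump (0 : Evec m) := fun j =>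
    ⟨δ / 2 / (j + 1) / 2, δ / 2 / (j + 1), by positivity, half_lt_self (by positivity)⟩
  have hφ0 : Tendsto (fun j => (φ j).rOut) atTop (𝓝 0) := by
    have := (tendsto_one_div_add_atTop_nhds_zero_nat (𝕜 := ℝ)).const_mul (δ / 2)
    simpa [φ, div_eq_mul_inv] using this
  have hφδ : ∀ j, (φ j).rOut ≤ δ / 2 := fun j =>
    div_le_self (by positivity) (by linarith [Nat.cast_nonneg (α := ℝ) j])
  let h : ℕ → Fin n → Evec m → ℝ := fun j i =>
    (φ j).normed volume ⋆[ContinuousLinearMap.lsmul ℝ ℝ] d i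
  have hli : ∀ j, LocallyIntegrable ((φ j).normed volume) := fun j =>
    (φ j).continuous_normed.locallyIntegrable
  have hsm : ∀ j i, ContDiff ℝ ∞ (h j i) := fun j i =>
    (φ j).hasCompactSupport_normed.contDiff_convolution_left _ (φ j).contDiff_normed
      (hd2 i).continuous.locallyIntegrable
  have hd1 : ∀ q i, ContDiff ℝ 1 (pdv q (d i)) := fun q i =>
    ((hd2 i).fderiv_right (m := 1) (by norm_num)).clm_apply contDiff_const
  have hd0 : ∀ p q i, Continuous (pdv p (pdv q (d i))) := fun p q i =>
    ((hd1 q i).continuous_fderiv (by simp)).clm_apply continuous_const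
  have hpd : ∀ j i p q, pdv p (pdv q (h j i))
      = (φ j).normed volume ⋆[ContinuousLinearMap.lsmul ℝ ℝ] pdv p (pdv q (d i)) := by
    intro j i p q
    rw [pdv_convolution (hli j) ((hd2 i).of_le (by norm_num)) (hds i),
      pdv_convolution (hli j) (hd1 q i) ((hds i).fderiv_apply ℝ _)]
  -- the mollified solutions are null solutions near `a`
  have hDk : ∀ j, ∀ x ∈ ball a r, ∀ u ∈ O', Dk m k (fun x u => ∑ i, h j i x * b i u) x u = 0 := by
    intro j x hx u hu
    rw [Dk_sum_mul isOpen_univ isOpen_univ (fun i => ((hsm j i).of_le ENat.LEInfty.out).contDiffOn)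
      (fun i => (hb i).contDiff) (fun _ _ _ _ => rfl) k x trivial u trivial]
    have := sum_bump_convolution_mul (φ j) (ι := Fin n × Fin m × Fin m)
      (D := fun s => pdv s.2.1 (pdv s.2.2 (d s.1))) (fun s => hd0 _ _ _)
      (fun s => coefDk m k (b s.1) s.2.1 s.2.2 u) (x := x) ?_
    · simpa only [Fintype.sum_prod_type, hpd] using this
    · intro z hz
      have hz' : z ∈ ball a (δ / 2 + r) := by
        rw [mem_ball] at *
        linarith [dist_triangle z x a, hφδ j]
      have hzO : z ∈ O := hδO (mem_closedBall.2 (by rw [mem_ball] at hz'; linarith))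
      rw [← hD z hzO u hu]
      simp only [Fintype.sum_prod_type]
      have he : ∀ i, d i =ᶠ[𝓝 z] c i := fun i =>
        eventually_of_mem (isOpen_ball.mem_nhds hz') fun y hy => hdc i (ball_subset_closedBall hy)
      refine Finset.sum_congr rfl fun i _ => Finset.sum_congr rfl fun p _ =>
        Finset.sum_congr rfl fun q _ => ?_
      have := ((he i).iterD [EuclideanSpace.single p 1, EuclideanSpace.single q 1]).eq_of_nhds
      exact congrArg (· * _) this
  have hrep : ∀ j, ∑ i, h j i a * b i u = ∫ y, (∑ i, h j i (a + r • y) * b i u) * ψ y := by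
    intro j
    refine hψr (fun x => ∑ i, h j i x * b i u) a r
      (ContDiff.sum fun i _ => (hsm j i).mul contDiff_const) hr fun x hx => ?_
    refine polyharmonic_of_Dk_eq_zero hm (f := fun x u => ∑ i, h j i x * b i u) ?_ ?_
      isOpen_ball hO' (hDk j) x hx u hu
    · exact ContDiff.sum fun i _ => ((hsm j i).comp contDiff_fst).mul
        ((hb i).contDiff.comp contDiff_snd)
    · intro c x u
      rw [Finset.mul_sum]
      refine Finset.sum_congr rfl fun i _ => ?_
      rw [(hb i).2.1 c u]
      ring
  have hlim : ∀ x, Tendsto (fun j => ∑ i, h j i x * b i u) atTop (𝓝 (∑ i, d i x * b i u)) :=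
    fun x => tendsto_finsetSum _ fun i _ =>
      (ContDiffBump.convolution_tendsto_right_of_continuous hφ0 (hd2 i).continuous x).mul_const _
  choose C hC using fun i => (hds i).exists_bound_of_continuous (hd2 i).continuous
  have hbound : ∀ j i x, |h j i x| ≤ 3 * C i := by
    intro j i x
    have h1 := (φ j).dist_normed_convolution_le (μ := volume) (g := d i) (x₀ := x) (ε := 2 * C i)
      (hd2 i).continuous.aestronglyMeasurable fun z _ => by
        have := hC i z
        have := hC i x
        have := dist_le_norm_add_norm (d i z) (d i x)
        linarith
    rw [Real.dist_eq] at h1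
    have h2 := hC i x
    rw [Real.norm_eq_abs] at h2
    have h3 : |h j i x| ≤ |h j i x - d i x| + |d i x| := by
      simpa using abs_add_le (h j i x - d i x) (d i x)
    linarith
  have hint : Tendsto (fun j => ∫ y, (∑ i, h j i (a + r • y) * b i u) * ψ y) atTop
      (𝓝 (∫ y, (∑ i, d i (a + r • y) * b i u) * ψ y)) := by
    refine tendsto_integral_of_dominated_convergence
      (fun y => (∑ i, 3 * C i * |b i u|) * |ψ y|) ?_ ?_ ?_ ?_
    · intro j
      refine Continuous.aestronglyMeasurable (Continuous.mul ?_ hψ.continuous)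
      exact continuous_finsetSum _ fun i _ =>
        ((hsm j i).continuous.comp (by fun_prop)).mul continuous_const
    · exact (hψ.continuous.integrable_of_hasCompactSupport hψs).abs.const_mul _
    · intro j
      refine Eventually.of_forall fun y => ?_
      rw [norm_mul, Real.norm_eq_abs, Real.norm_eq_abs]
      gcongr
      refine (Finset.abs_sum_le_sum_abs _ _).trans (Finset.sum_le_sum fun i _ => ?_)
      rw [abs_mul]
      gcongr
      exact hbound j i _
    · exact Eventually.of_forall fun y => (hlim _).mul_const _
  have hfin := tendsto_nhds_unique (hlim a) (by simpa only [hrep] using hint)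
  have hdc' : ∀ i, ∀ x ∈ closedBall a r, d i x = c i x := fun i x hx =>
    hdc i (closedBall_subset_closedBall (by linarith) hx)
  rw [← Finset.sum_congr rfl fun i _ => congrArg (· * b i u) (hdc' i a (mem_closedBall_self hr.le)),
    hfin]
  refine integral_congr_ae (Eventually.of_forall fun y => ?_)
  by_cases hy : 1 ≤ ‖y‖
  · simp [hψ0 y hy]
  · have hy' : a + r • y ∈ closedBall a r := by
      rw [mem_closedBall_iff_norm, add_sub_cancel_left, norm_smul, Real.norm_of_nonneg hr.le]
      nlinarith
    simp only [hdc' _ _ hy']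

end

/-- The list of coordinate directions encoding the multi-index `α`. -/
def multiDir {m : ℕ} (α : Fin m → ℕ) : List (Evec m) :=
  (List.finRange m).flatMap fun i => List.replicate (α i) (EuclideanSpace.single i 1)

theorem length_multiDir {m : ℕ} (α : Fin m → ℕ) : (multiDir α).length = ∑ i, α i := by
  simp [multiDir, List.length_flatMap, Fin.sum_univ_def]

theorem Dx_eq_iterD {m : ℕ} (α : Fin m → ℕ) (f : Evec m → Evec m → ℝ) (x u : Evec m) :
    Dx α f x u = iterD (multiDir α) (fun x => f x u) x := by
  have h1 : ∀ (i : Fin m) (j : ℕ) (g : Evec m → Evec m → ℝ) (x : Evec m), (pd1 i)^[j] g x u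
      = iterD (List.replicate j (EuclideanSpace.single i 1)) (fun x => g x u) x := by
    intro i j g
    induction j with
    | zero => exact fun _ => rfl
    | succ j ih =>
      intro x
      rw [Function.iterate_succ_apply']
      change fderiv ℝ (fun x => (pd1 i)^[j] g x u) x _ = _
      rw [funext ih]
      rfl
  unfold Dx multiDir
  induction List.finRange m generalizing x with
  | nil => rfl
  | cons i L ih =>
    rw [List.foldr_cons, h1, List.flatMap_cons, iterD, iterD, List.foldr_append]
    exact congrArg (fun g => iterD (List.replicate (α i) (EuclideanSpace.single i 1)) g x) (funext ih)

theorem Dv_eq_iterD {m : ℕ} (β : Fin m → ℕ) (f : Evec m → Evec m → ℝ) (x u : Evec m) :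
    Dv β f x u = iterD (multiDir β) (fun u => f x u) u := by
  have h : ∀ L : List (Fin m), ∀ x u, L.foldr (fun i g => (pd2 i)^[β i] g) f x u
      = L.foldr (fun i g => (pd1 i)^[β i] g) (fun u x => f x u) u x := by
    intro L
    induction L with
    | nil => exact fun _ _ => rfl
    | cons i L ih =>
      have h1 : ∀ (j : ℕ) (g g' : Evec m → Evec m → ℝ), (∀ x u, g x u = g' u x) →
          ∀ x u, (pd2 i)^[j] g x u = (pd1 i)^[j] g' u x := by
        intro j g g' hg
        induction j with
        | zero => exact hg
        | succ j ihj =>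
          intro x u
          rw [Function.iterate_succ_apply', Function.iterate_succ_apply', pd2, pd1]
          simp only [ihj]
      exact h1 _ _ _ ih
  exact (h _ x u).trans (Dx_eq_iterD β (fun u x => f x u) u x)

/-- Cauchy's estimates for null solutions of the bosonic Laplacian,
`m > 4`, with a constant depending only on `α`, `β`, `m`, `k`. -/
theorem stmt_15 (m k : ℕ) (hm : 4 < m) (hk : 1 ≤ k) (α β : Fin m → ℕ) :
    ∃ c : ℝ, 0 < c ∧
      ∀ Ω : Set (Evec m), IsOpen Ω →
        ∀ f : Evec m → Evec m → ℝ, C2Hk m k Ω f →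
          (∀ x ∈ Ω, ∀ u ∈ ball (0 : Evec m) 1, Dk m k f x u = 0) →
          (ContDiffOn ℝ (⊤ : ℕ∞) (fun q : Evec m × Evec m => f q.1 q.2)
            (Ω ×ˢ ball (0 : Evec m) 1)) ∧
          ∀ (a ν₀ : Evec m) (r₁ r₂ : ℝ), 0 < r₁ → 0 < r₂ →
            closedBall a r₁ ⊆ Ω → closedBall ν₀ r₂ ⊆ ball (0 : Evec m) 1 →
            ∀ M : ℝ, (∀ x ∈ ball a r₁, ∀ ν ∈ ball ν₀ r₂, |f x ν| ≤ M) →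
              |Dv β (Dx α f) a ν₀| ≤ c * M / (r₁ ^ (∑ i, α i) * r₂ ^ (∑ i, β i)) := by
  obtain ⟨n, b, w, hb, hbasis⟩ := exists_hk_basis m k
  obtain ⟨ψ, hψ, hψs, hψ0, hψr⟩ := exists_polyharmonic_kernel m (k + 1)
  obtain ⟨η, hη, hηs, hη0, hηr⟩ := exists_polyharmonic_kernel m 1
  obtain ⟨C₁, hC₁, hest₁⟩ := cauchy_estimate_of_reproducing hψ hψs hψ0 (multiDir α)
  obtain ⟨C₂, hC₂, hest₂⟩ := cauchy_estimate_of_reproducing hη hηs hη0 (multiDir β)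
  rw [length_multiDir] at hest₁ hest₂
  refine ⟨C₁ * C₂ + 1, by positivity, fun Ω hΩ f hf hD => ?_⟩
  let c : Fin n → Evec m → ℝ := fun i x => (w i).sum fun s t => t * f x s
  have hfc : ∀ x ∈ Ω, ∀ u ∈ ball (0 : Evec m) 1, f x u = ∑ i, c i x * b i u := by
    intro x hx u hu
    obtain ⟨q, hq, hfq⟩ := hf.2 x hx
    rw [hfq u (ball_subset_closedBall hu), hbasis q hq u]
    refine Finset.sum_congr rfl fun i _ => congrArg (· * b i u) (Finsupp.sum_congr fun s _ => ?_)
    rw [hfq s (ball_subset_closedBall s.2)]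
  have hslice : ∀ u ∈ ball (0 : Evec m) 1, ContDiffOn ℝ 2 (fun x => f x u) Ω := fun u hu =>
    hf.1.comp (f := fun x => (x, u)) (contDiff_id.prodMk contDiff_const).contDiffOn
      fun x hx => ⟨hx, hu⟩
  have hcsum : ∀ N : WithTop ℕ∞, (∀ u ∈ ball (0 : Evec m) 1, ContDiffOn ℝ N (fun x => f x u) Ω) →
      ∀ i, ContDiffOn ℝ N (c i) Ω := fun N h i =>
    ContDiffOn.sum fun s _ => contDiffOn_const.mul (h s s.2)
  have hc2 := hcsum 2 hslice
  have hDc : ∀ x ∈ Ω, ∀ u ∈ ball (0 : Evec m) 1,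
      ∑ i, ∑ p, ∑ q, pdv p (pdv q (c i)) x * coefDk m k (b i) p q u = 0 := fun x hx u hu => by
    rw [← hD x hx u hu]
    exact (Dk_sum_mul hΩ isOpen_ball hc2 (fun i => (hb i).contDiff) hfc k x hx u hu).symm
  have hrep : ∀ a r, 0 < r → closedBall a r ⊆ Ω → ∀ u ∈ ball (0 : Evec m) 1,
      f a u = ∫ y, f (a + r • y) u * ψ y := by
    intro a r hr ha u hu
    rw [hfc a (ha (mem_closedBall_self hr.le)) u hu,
      reproducing_of_Dk_coeff hm hψ hψs hψ0 hψr hb hΩ isOpen_ball hc2 hDc hr ha hu]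
    refine integral_congr_ae (Eventually.of_forall fun y => ?_)
    by_cases hy : 1 ≤ ‖y‖
    · simp [hψ0 y hy]
    · have hy' : a + r • y ∈ closedBall a r := by
        rw [mem_closedBall_iff_norm, add_sub_cancel_left, norm_smul, Real.norm_of_nonneg hr.le]
        nlinarith
      simp only [hfc _ (ha hy') u hu]
  have hest : ∀ a r M u, 0 < r → closedBall a r ⊆ Ω → u ∈ ball (0 : Evec m) 1 →
      (∀ x ∈ ball a r, |f x u| ≤ M) → ContDiffAt ℝ ∞ (fun x => f x u) a ∧
        |iterD (multiDir α) (fun x => f x u) a| ≤ C₁ * M / r ^ (∑ i, α i) := by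
    intro a r M u hr ha hu hM
    refine hest₁ (fun x => f x u) a r M hr
      ((hslice u hu).continuousOn.mono fun z hz => ha (ball_subset_closedBall hz)) hM fun x hx => ?_
    refine hrep x (r / 2) (by positivity) (fun z hz => ha ?_) u hu
    exact closedBall_subset_closedBall' (by linarith [mem_ball.1 hx]) hz
  have hsmooth : ∀ u ∈ ball (0 : Evec m) 1, ContDiffOn ℝ ∞ (fun x => f x u) Ω := by
    intro u hu x hx
    obtain ⟨r, hr, hrΩ⟩ := nhds_basis_closedBall.mem_iff.1 (hΩ.mem_nhds hx)
    obtain ⟨M, hM⟩ := (isCompact_closedBall x r).exists_bound_of_continuousOn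
      ((hslice u hu).continuousOn.mono hrΩ)
    exact (hest x r M u hr hrΩ hu fun z hz =>
      hM z (ball_subset_closedBall hz)).1.contDiffWithinAt
  have hc := hcsum ∞ hsmooth
  refine ⟨?_, fun a ν₀ r₁ r₂ hr₁ hr₂ ha hν₀ M hM => ?_⟩
  · refine ContDiffOn.congr (f := fun q : Evec m × Evec m => ∑ i, c i q.1 * b i q.2) ?_
      fun q hq => hfc q.1 hq.1 q.2 hq.2
    exact ContDiffOn.sum fun i _ =>
      ((hc i).comp contDiff_fst.contDiffOn fun q hq => hq.1).mul
        ((hb i).contDiff.comp contDiff_snd).contDiffOn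
  have haΩ : a ∈ Ω := ha (mem_closedBall_self hr₁.le)
  have hM0 : 0 ≤ M :=
    (abs_nonneg _).trans (hM a (mem_ball_self hr₁) ν₀ (mem_ball_self hr₂))
  let p : Evec m → ℝ := fun u => ∑ i, iterD (multiDir α) (c i) a * b i u
  have hp : IsHk m k p := by
    have : (∑ i, iterD (multiDir α) (c i) a • b i) ∈ hkSubmodule m k :=
      Submodule.sum_mem _ fun i _ => Submodule.smul_mem _ _ (hb i)
    convert mem_hkSubmodule.1 this using 1
    ext u
    simp [p]
  have hDx : ∀ u ∈ ball (0 : Evec m) 1, iterD (multiDir α) (fun x => f x u) a = p u := by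
    intro u hu
    have he : (fun x => f x u) =ᶠ[𝓝 a] fun x => ∑ i, c i x * b i u :=
      eventually_of_mem (hΩ.mem_nhds haΩ) fun x hx => hfc x hx u hu
    rw [(he.iterD _).eq_of_nhds]
    exact (iterD_sum_mul Finset.univ hΩ (fun i _ => hc i) (fun i => b i u) _).2 a haΩ
  have hpM : ∀ u ∈ ball ν₀ r₂, |p u| ≤ C₁ * M / r₁ ^ (∑ i, α i) := by
    intro u hu
    have hu' := hν₀ (ball_subset_closedBall hu)
    rw [← hDx u hu']
    exact (hest a r₁ M u hr₁ ha hu' fun x hx => hM x hx u hu).2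
  have hfin := (hest₂ p ν₀ r₂ _ hr₂ hp.contDiff.continuous.continuousOn hpM fun x _ =>
    hηr p x (r₂ / 2) hp.contDiff (by positivity) fun z _ => hp.2.2 z).2
  have hDv : Dv β (Dx α f) a ν₀ = iterD (multiDir β) p ν₀ := by
    rw [Dv_eq_iterD]
    have he : (fun u => Dx α f a u) =ᶠ[𝓝 ν₀] p :=
      eventually_of_mem (isOpen_ball.mem_nhds (hν₀ (mem_closedBall_self hr₂.le))) fun u hu =>
        (Dx_eq_iterD α f a u).trans (hDx u hu)
    exact (he.iterD _).eq_of_nhds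
  rw [hDv]
  refine hfin.trans ?_
  rw [mul_div_assoc', div_div, ← mul_assoc]
  gcongr
  linarith [mul_comm C₁ C₂]
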